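/- The entire function Z₂(s) has no zero in the region 1/2 < Re(s) < 20, |Im(s)| ≥ 36; that is, for every complex s with 1/2 < Re(s) < 20 and |Im(s)| ≥ 36 one has Z₂(s) ≠ 0. -/

import Mathlib

open Complex

noncomputable def chi (s : ℂ) : ℂ := s * (s - 1) * completedRiemannZeta₀ s + 1

noncomputable def A : ℂ := Real.pi / 3 - 1

noncomputable def f1 (s : ℂ) : ℂ :=
  (s - 1) * ((s - 1) * (3 * s - 2) * (A * s - A + 1) * chi (s + 1) * chi (3 * s)
    - (s + 1) * (s - 2) * chi s * chi (3 * s - 1)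
    - 2 * (s - 1) * (s - 2) * chi s * chi (3 * s))

noncomputable def f2 (s : ℂ) : ℂ :=
  (s - 2) * ((A * s + 3) * (s - 1) ^ 2 * chi (s + 2)
    - 2 * (s - 1) * (s - 3) * chi (s + 1)
    - (s + 2) * (s - 3) * chi s)

noncomputable def Z1 (s : ℂ) : ℂ := chi (2 * s) * f1 s - chi (2 * s - 1) * f1 (1 - s)

noncomputable def Z2 (s : ℂ) : ℂ := chi (2 * s) * f2 s - chi (2 * s - 1) * f2 (1 - s)

/-!
Since `‖chi (2 * s - 1)‖ ≤ ‖chi (2 * s)‖` for `1 / 2 ≤ s.re`, it is enough that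
`‖f2 (1 - s)‖ < ‖f2 s‖`.

The first inequality is an instance of the reflection principle `‖chi (c - w)‖ ≤ ‖chi (c + w)‖` for
`1 ≤ c` and `0 ≤ w.re`: the quotient has modulus one on the imaginary axis because `chi` commutes
with conjugation, and Phragmén–Lindelöf applies because it grows at most exponentially and is
bounded on the positive real axis.

For the second, explicit estimates of `‖chi w‖ / ‖chi (w + 1)‖` show that the summand of `f2` with
`chi (s + 2)` dominates, which bounds `f2 (1 - s) / f2 s` by a constant depending on `s.re`. The
constant is below `1` once `3 ≤ s.re`. To the left of that, `f2 (1 - s) / f2 s` has modulus one on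
the critical line, and the maximum principle on the half-disc of radius `7` about
`1 / 2 + s.im * I` carries the bounds on the arc to the interior.
-/

section

open scoped ComplexConjugate

/-! ### The function `chi` -/

theorem chi_one_sub (s : ℂ) : chi (1 - s) = chi s := by
  rw [chi, chi, completedRiemannZeta₀_one_sub]
  ring

theorem differentiable_chi : Differentiable ℂ chi := by
  have := differentiable_completedZeta₀
  unfold chi
  fun_prop

theorem chi_one : chi 1 = 1 := by simp [chi]

theorem chi_eq_mul_Gammaℝ_mul_riemannZeta {s : ℂ} (hs : 0 < s.re) (hs1 : s ≠ 1) :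
    chi s = s * (s - 1) * (Gammaℝ s * riemannZeta s) := by
  have hs0 : s ≠ 0 := ne_zero_of_re_pos hs
  have h1s : (1 : ℂ) - s ≠ 0 := sub_ne_zero.mpr hs1.symm
  rw [riemannZeta_def_of_ne_zero hs0, mul_div_cancel₀ _ (Gammaℝ_ne_zero_of_re_pos hs),
    completedRiemannZeta_eq, chi]
  field_simp
  ring

theorem chi_ne_zero_of_one_le_re {s : ℂ} (hs : 1 ≤ s.re) : chi s ≠ 0 := by
  have hs0 : 0 < s.re := by linarith
  rcases eq_or_ne s 1 with rfl | hs1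
  · simp [chi_one]
  · rw [chi_eq_mul_Gammaℝ_mul_riemannZeta hs0 hs1]
    exact mul_ne_zero (mul_ne_zero (ne_zero_of_re_pos hs0) (sub_ne_zero.mpr hs1))
      (mul_ne_zero (Gammaℝ_ne_zero_of_re_pos hs0) (riemannZeta_ne_zero_of_one_le_re hs))

theorem Gammaℝ_conj (s : ℂ) : Gammaℝ (conj s) = conj (Gammaℝ s) := by
  have hpi : (Real.pi : ℂ).arg ≠ Real.pi := by
    rw [arg_ofReal_of_nonneg Real.pi_pos.le]
    exact Real.pi_pos.ne
  have hdiv : conj s / 2 = conj (s / 2) := by rw [map_div₀, map_ofNat]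
  have hneg : -conj s / 2 = conj (-s / 2) := by rw [map_div₀, map_neg, map_ofNat]
  rw [Gammaℝ_def, Gammaℝ_def, map_mul, hdiv, hneg, Gamma_conj, cpow_conj _ _ hpi, conj_ofReal]

theorem chi_conj_of_re_pos {s : ℂ} (hs : 0 < s.re) : chi (conj s) = conj (chi s) := by
  rcases eq_or_ne s 1 with rfl | hs1
  · simp [chi_one]
  · have hconj : conj s ≠ 1 := fun h => hs1 (by simpa using congrArg conj h)
    rw [chi_eq_mul_Gammaℝ_mul_riemannZeta hs hs1,
      chi_eq_mul_Gammaℝ_mul_riemannZeta (by simpa using hs) hconj, Gammaℝ_conj, riemannZeta_conj]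
    simp

theorem chi_conj (s : ℂ) : chi (conj s) = conj (chi s) := by
  rcases lt_or_ge 0 s.re with hs | hs
  · exact chi_conj_of_re_pos hs
  · rw [← chi_one_sub, ← chi_one_sub s, ← chi_conj_of_re_pos (by simp; linarith)]
    simp

/-! ### The Gamma function on vertical lines -/

theorem norm_betaIntegral_le (u v : ℂ) : ‖betaIntegral u v‖ ≤ ‖betaIntegral u.re v.re‖ := by
  have hreal : betaIntegral u.re v.re =
      ((∫ x in (0 : ℝ)..1, x ^ (u.re - 1) * (1 - x) ^ (v.re - 1) : ℝ) : ℂ) := by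
    rw [betaIntegral, ← intervalIntegral.integral_ofReal]
    refine intervalIntegral.integral_congr fun x hx => ?_
    rw [Set.uIcc_of_le zero_le_one] at hx
    push_cast
    rw [ofReal_cpow hx.1, ofReal_cpow (by linarith [hx.2])]
    push_cast
    rfl
  rw [hreal, norm_real, betaIntegral]
  refine ((intervalIntegral.norm_integral_le_integral_norm zero_le_one).trans_eq ?_).trans
    (le_abs_self _)
  refine intervalIntegral.integral_congr_Ioo_of_le zero_le_one fun x hx => ?_
  rw [norm_mul, norm_cpow_eq_rpow_re_of_pos hx.1, ← ofReal_one, ← ofReal_sub,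
    norm_cpow_eq_rpow_re_of_pos (by linarith [hx.2])]
  simp

theorem norm_Gamma_mul_Gamma_re_add_le {z : ℂ} (hz : 0 < z.re) {y : ℝ} (hy : 0 ≤ y) :
    ‖Gamma z‖ * Real.Gamma (z.re + y) ≤ Real.Gamma z.re * ‖Gamma (z + y)‖ := by
  rcases hy.eq_or_lt with rfl | hy
  · simp [mul_comm]
  have hGy := Real.Gamma_pos_of_pos hy
  have hGz := Real.Gamma_pos_of_pos hz
  have hGzy := Real.Gamma_pos_of_pos (add_pos hz hy)
  have hcomplex : ‖Gamma z‖ * Real.Gamma y = ‖Gamma (z + y)‖ * ‖betaIntegral z y‖ := by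
    have h := congrArg norm (Gamma_mul_Gamma_eq_betaIntegral hz
      (by simpa using hy : 0 < (y : ℂ).re))
    rwa [norm_mul, norm_mul, Gamma_ofReal, norm_real, Real.norm_of_nonneg hGy.le] at h
  have hreal : Real.Gamma z.re * Real.Gamma y =
      Real.Gamma (z.re + y) * ‖betaIntegral z.re y‖ := by
    have h := congrArg norm (Gamma_mul_Gamma_eq_betaIntegral (by simpa using hz : 0 < (z.re : ℂ).re)
      (by simpa using hy : 0 < (y : ℂ).re))
    rwa [← ofReal_add, norm_mul, norm_mul, Gamma_ofReal, Gamma_ofReal, Gamma_ofReal,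
      norm_real, norm_real, norm_real,
      Real.norm_of_nonneg hGz.le, Real.norm_of_nonneg hGy.le, Real.norm_of_nonneg hGzy.le] at h
  have hbeta : ‖betaIntegral z y‖ ≤ ‖betaIntegral z.re y‖ := norm_betaIntegral_le z y
  refine le_of_mul_le_mul_right ?_ hGy
  calc ‖Gamma z‖ * Real.Gamma (z.re + y) * Real.Gamma y
      = ‖Gamma (z + y)‖ * ‖betaIntegral z y‖ * Real.Gamma (z.re + y) := by
        rw [mul_right_comm, hcomplex]
    _ ≤ ‖Gamma (z + y)‖ * ‖betaIntegral z.re y‖ * Real.Gamma (z.re + y) := by gcongr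
    _ = Real.Gamma z.re * ‖Gamma (z + y)‖ * Real.Gamma y := by
        rw [mul_right_comm (Real.Gamma z.re), hreal]
        ring

theorem norm_Gamma_le_norm_Gamma_add {z : ℂ} (hz : 2 ≤ z.re) {y : ℝ} (hy : 0 ≤ y) :
    ‖Gamma z‖ ≤ ‖Gamma (z + y)‖ := by
  have hmono : Real.Gamma z.re ≤ Real.Gamma (z.re + y) :=
    Real.Gamma_strictMonoOn_Ici.monotoneOn hz (by simp only [Set.mem_Ici]; linarith) (by linarith)
  refine le_of_mul_le_mul_left ?_ (Real.Gamma_pos_of_pos (by linarith : 0 < z.re))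
  calc Real.Gamma z.re * ‖Gamma z‖
      ≤ ‖Gamma z‖ * Real.Gamma (z.re + y) := by rw [mul_comm]; gcongr
    _ ≤ Real.Gamma z.re * ‖Gamma (z + y)‖ := norm_Gamma_mul_Gamma_re_add_le (by linarith) hy

theorem norm_Gamma_half_add_mul_I_sq (b : ℝ) :
    ‖Gamma (1 / 2 + b * I)‖ ^ 2 = Real.pi / Real.cosh (Real.pi * b) := by
  have hconj : (1 : ℂ) - (1 / 2 + b * I) = conj (1 / 2 + b * I) := by
    apply Complex.ext <;> norm_num
  have hsin : sin (Real.pi * (1 / 2 + b * I)) = (Real.cosh (Real.pi * b) : ℝ) := by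
    rw [mul_add, mul_one_div, add_comm, sin_add_pi_div_two, ← mul_assoc, cos_mul_I]
    push_cast
    rfl
  have h := congrArg norm (Gamma_mul_Gamma_one_sub (1 / 2 + b * I))
  rwa [hconj, Gamma_conj, hsin, norm_mul, norm_conj, ← sq, norm_div, norm_real,
    norm_real, Real.norm_of_nonneg Real.pi_pos.le, Real.norm_of_nonneg (Real.cosh_pos _).le] at h

theorem cosh_le_exp_abs (x : ℝ) : Real.cosh x ≤ Real.exp |x| := by
  rw [← Real.cosh_abs, Real.cosh_eq]
  have : Real.exp (-|x|) ≤ Real.exp |x| := Real.exp_le_exp.mpr (by linarith [abs_nonneg x])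
  linarith

theorem sqrt_pi_mul_exp_le_norm_Gamma_half_add_mul_I (b : ℝ) :
    √Real.pi * Real.exp (-(Real.pi * |b|)) ≤ ‖Gamma (1 / 2 + b * I)‖ := by
  have hpi := Real.pi_pos
  refine le_of_sq_le_sq ?_ (norm_nonneg _)
  have hcosh : Real.cosh (Real.pi * b) ≤ Real.exp (2 * (Real.pi * |b|)) := by
    refine (cosh_le_exp_abs _).trans (Real.exp_le_exp.mpr ?_)
    rw [abs_mul, abs_of_pos hpi]
    linarith [mul_nonneg hpi.le (abs_nonneg b)]
  rw [norm_Gamma_half_add_mul_I_sq, mul_pow, Real.sq_sqrt hpi.le, ← Real.exp_nat_mul,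
    Nat.cast_ofNat, mul_neg, Real.exp_neg, ← div_eq_mul_inv]
  gcongr

theorem Gamma_re_mul_exp_le_norm_Gamma {z : ℂ} (hz : 1 / 2 ≤ z.re) :
    Real.Gamma z.re * Real.exp (-(Real.pi * |z.im|)) ≤ ‖Gamma z‖ := by
  have hratio := norm_Gamma_mul_Gamma_re_add_le (z := 1 / 2 + z.im * I) (by simp)
    (sub_nonneg.mpr hz)
  have hz_eq : 1 / 2 + z.im * I + ((z.re - 1 / 2 : ℝ) : ℂ) = z := by apply Complex.ext <;> simp
  have hre : (1 / 2 + z.im * I : ℂ).re = 1 / 2 := by simp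
  rw [hz_eq, hre, Real.Gamma_one_half_eq, add_sub_cancel] at hratio
  refine le_of_mul_le_mul_left ?_ (Real.sqrt_pos.mpr Real.pi_pos)
  calc √Real.pi * (Real.Gamma z.re * Real.exp (-(Real.pi * |z.im|)))
      = √Real.pi * Real.exp (-(Real.pi * |z.im|)) * Real.Gamma z.re := by ring
    _ ≤ ‖Gamma (1 / 2 + z.im * I)‖ * Real.Gamma z.re := by
        gcongr
        exact sqrt_pi_mul_exp_le_norm_Gamma_half_add_mul_I z.im
    _ ≤ √Real.pi * ‖Gamma z‖ := hratio

theorem norm_Gammaℝ (z : ℂ) : ‖Gammaℝ z‖ = Real.pi ^ (-z.re / 2) * ‖Gamma (z / 2)‖ := by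
  rw [Gammaℝ_def, norm_mul, norm_cpow_eq_rpow_re_of_pos Real.pi_pos]
  simp

theorem sq_norm_eq_re_sq_add_im_sq (z : ℂ) : ‖z‖ ^ 2 = z.re ^ 2 + z.im ^ 2 := by
  rw [Complex.sq_norm, normSq_apply, sq, sq]

/-- A lower bound for `‖Γ(z + 1/2) / Γ(z)‖ ^ 4` with the correct leading term `‖z‖ ^ 2`; the lower
order terms are chosen so that the bound propagates along `z ↦ z + 1`. -/
noncomputable def gammaHalfStepWeight (z : ℂ) : ℝ := ‖z‖ ^ 2 - z.re / 2 - 1 / 8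

theorem gammaHalfStepWeight_eq (z : ℂ) :
    gammaHalfStepWeight z = z.re ^ 2 + z.im ^ 2 - z.re / 2 - 1 / 8 := by
  rw [gammaHalfStepWeight, sq_norm_eq_re_sq_add_im_sq]

theorem norm_add_half_pow_mul_gammaHalfStepWeight_le {z : ℂ} (hz : 0 ≤ z.re) :
    ‖z + 1 / 2‖ ^ 4 * gammaHalfStepWeight z ≤ ‖z‖ ^ 4 * gammaHalfStepWeight (z + 1) := by
  have hnorm (w : ℂ) : ‖w‖ ^ 4 = (w.re ^ 2 + w.im ^ 2) ^ 2 := by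
    rw [show ‖w‖ ^ 4 = (‖w‖ ^ 2) ^ 2 by ring, sq_norm_eq_re_sq_add_im_sq]
  have hre : (z + 1 / 2).re = z.re + 1 / 2 := by simp
  have him : (z + 1 / 2).im = z.im := by simp
  have hdiff : ‖z‖ ^ 4 * gammaHalfStepWeight (z + 1) - ‖z + 1 / 2‖ ^ 4 * gammaHalfStepWeight z =
      (z.re + 1 / 4) ^ 3 / 2 := by
    rw [hnorm, hnorm, gammaHalfStepWeight_eq, gammaHalfStepWeight_eq, hre, him, add_re, add_im,
      one_re, one_im]
    ring
  rw [← sub_nonneg, hdiff]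
  positivity

theorem prod_norm_pow_mul_gammaHalfStepWeight_le {u : ℂ} (hu : 0 ≤ u.re) (n : ℕ) :
    (∏ j ∈ Finset.range n, ‖u + 1 / 2 + j‖) ^ 4 * gammaHalfStepWeight u ≤
      (∏ j ∈ Finset.range n, ‖u + j‖) ^ 4 * gammaHalfStepWeight (u + n) := by
  induction n with
  | zero => simp
  | succ n ih =>
    have hstep := norm_add_half_pow_mul_gammaHalfStepWeight_le (z := u + n)
      (by simp only [add_re, natCast_re]; positivity)
    rw [Finset.prod_range_succ, Finset.prod_range_succ, Nat.cast_succ, ← add_assoc,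
      add_right_comm u (1 / 2) (n : ℂ)]
    set P := ∏ j ∈ Finset.range n, ‖u + 1 / 2 + j‖
    set Q := ∏ j ∈ Finset.range n, ‖u + j‖
    calc (P * ‖u + n + 1 / 2‖) ^ 4 * gammaHalfStepWeight u
        = ‖u + n + 1 / 2‖ ^ 4 * (P ^ 4 * gammaHalfStepWeight u) := by ring
      _ ≤ ‖u + n + 1 / 2‖ ^ 4 * (Q ^ 4 * gammaHalfStepWeight (u + n)) := by gcongr
      _ = Q ^ 4 * (‖u + n + 1 / 2‖ ^ 4 * gammaHalfStepWeight (u + n)) := by ring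
      _ ≤ Q ^ 4 * (‖u + n‖ ^ 4 * gammaHalfStepWeight (u + n + 1)) := by gcongr
      _ = (Q * ‖u + n‖) ^ 4 * gammaHalfStepWeight (u + n + 1) := by ring

theorem prod_norm_add_natCast_pos {u : ℂ} (hu : 0 < u.re) (n : ℕ) :
    0 < ∏ j ∈ Finset.range n, ‖u + j‖ :=
  Finset.prod_pos fun j _ => norm_pos_iff.mpr <| ne_zero_of_re_pos <| by
    simp only [add_re, natCast_re]
    positivity

theorem norm_GammaSeq_pow_mul_gammaHalfStepWeight_le {u : ℂ} (hu : 0 < u.re) {n : ℕ} (hn : 0 < n) :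
    ‖GammaSeq u n‖ ^ 4 * gammaHalfStepWeight u ≤
      ‖GammaSeq (u + 1 / 2) n‖ ^ 4 * (gammaHalfStepWeight (u + (n + 1 : ℕ)) / n ^ 2) := by
  have hnpos : (0 : ℝ) < n := by exact_mod_cast hn
  have hre : (u + 1 / 2).re = u.re + 1 / 2 := by simp
  have hpow : ((n : ℝ) ^ (u.re + 1 / 2)) ^ 4 = ((n : ℝ) ^ u.re) ^ 4 * (n : ℝ) ^ 2 := by
    rw [Real.rpow_add hnpos, ← Real.sqrt_eq_rpow, mul_pow,
      show √(n : ℝ) ^ 4 = (√(n : ℝ) ^ 2) ^ 2 by ring, Real.sq_sqrt hnpos.le]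
  have hprod := prod_norm_pow_mul_gammaHalfStepWeight_le hu.le (n + 1)
  have hP := prod_norm_add_natCast_pos (u := u + 1 / 2) (by rw [hre]; positivity) (n + 1)
  have hQ := prod_norm_add_natCast_pos hu (n + 1)
  simp only [GammaSeq, norm_div, norm_mul, norm_prod, norm_natCast_cpow_of_pos hn, hre, div_pow,
    mul_pow, hpow]
  set P := ∏ j ∈ Finset.range (n + 1), ‖u + 1 / 2 + j‖
  set Q := ∏ j ∈ Finset.range (n + 1), ‖u + j‖
  set W := gammaHalfStepWeight (u + (n + 1 : ℕ))
  set c := ((n : ℝ) ^ u.re) ^ 4 * ‖((Nat.factorial n : ℕ) : ℂ)‖ ^ 4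
  calc c / Q ^ 4 * gammaHalfStepWeight u
      = c / (P ^ 4 * Q ^ 4) * (P ^ 4 * gammaHalfStepWeight u) := by field_simp
    _ ≤ c / (P ^ 4 * Q ^ 4) * (Q ^ 4 * W) := by gcongr
    _ = ((n : ℝ) ^ u.re) ^ 4 * (n : ℝ) ^ 2 * ‖((Nat.factorial n : ℕ) : ℂ)‖ ^ 4 / P ^ 4 *
        (W / (n : ℝ) ^ 2) := by
      field_simp
      ring

theorem tendsto_gammaHalfStepWeight_div_sq (u : ℂ) :
    Filter.Tendsto (fun n : ℕ => gammaHalfStepWeight (u + (n + 1 : ℕ)) / (n : ℝ) ^ 2)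
      Filter.atTop (nhds 1) := by
  have hinv := tendsto_inv_atTop_nhds_zero_nat (𝕜 := ℝ)
  have hlim : Filter.Tendsto (fun n : ℕ => (1 + (u.re + 1) * (n : ℝ)⁻¹) ^ 2 +
      (u.im * (n : ℝ)⁻¹) ^ 2 - (1 + (u.re + 1) * (n : ℝ)⁻¹) * (n : ℝ)⁻¹ / 2 - ((n : ℝ)⁻¹) ^ 2 / 8)
      Filter.atTop (nhds ((1 + (u.re + 1) * 0) ^ 2 + (u.im * 0) ^ 2 -
        (1 + (u.re + 1) * 0) * 0 / 2 - 0 ^ 2 / 8)) :=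
    (((((hinv.const_mul _).const_add 1).pow 2).add ((hinv.const_mul _).pow 2)).sub
      ((((hinv.const_mul _).const_add 1).mul hinv).div_const 2)).sub ((hinv.pow 2).div_const 8)
  rw [show (1 + (u.re + 1) * 0) ^ 2 + (u.im * 0) ^ 2 - (1 + (u.re + 1) * 0) * 0 / 2 - 0 ^ 2 / 8 =
    (1 : ℝ) by ring] at hlim
  refine hlim.congr' ?_
  filter_upwards [Filter.eventually_gt_atTop 0] with n hn
  rw [gammaHalfStepWeight_eq, add_re, add_im, natCast_re, natCast_im]
  push_cast
  field_simp
  ring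

theorem norm_Gamma_pow_mul_gammaHalfStepWeight_le {u : ℂ} (hu : 0 < u.re) :
    ‖Gamma u‖ ^ 4 * gammaHalfStepWeight u ≤ ‖Gamma (u + 1 / 2)‖ ^ 4 := by
  have hleft := ((GammaSeq_tendsto_Gamma u).norm.pow 4).mul_const (gammaHalfStepWeight u)
  have hright := ((GammaSeq_tendsto_Gamma (u + 1 / 2)).norm.pow 4).mul
    (tendsto_gammaHalfStepWeight_div_sq u)
  rw [mul_one] at hright
  refine le_of_tendsto_of_tendsto hleft hright ?_
  filter_upwards [Filter.eventually_gt_atTop 0] with n hn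
  exact norm_GammaSeq_pow_mul_gammaHalfStepWeight_le hu hn

/-! ### The zeta function to the right of the critical strip -/

theorem LSeries_ofReal_eq_tsum_norm {g : ℕ → ℝ} (hg : ∀ n, 0 ≤ g n) (x : ℝ) :
    LSeries (fun n => (g n : ℂ)) x =
      ((∑' n, ‖LSeries.term (fun n => (g n : ℂ)) x n‖ : ℝ) : ℂ) := by
  rw [LSeries, ofReal_tsum]
  refine tsum_congr fun n => ?_
  rcases eq_or_ne n 0 with rfl | hn
  · simp
  · rw [LSeries.norm_term_eq, if_neg hn, LSeries.term_of_ne_zero hn, ofReal_re, norm_real,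
      Real.norm_of_nonneg (hg n), ofReal_div, ofReal_cpow (Nat.cast_nonneg n), ofReal_natCast]

theorem norm_LSeries_le_norm_LSeries_ofReal {f : ℕ → ℂ} {g : ℕ → ℝ} (hfg : ∀ n, ‖f n‖ ≤ g n)
    {s : ℂ} {x : ℝ} (hx : x ≤ s.re) (hg : LSeriesSummable (fun n => (g n : ℂ)) x) :
    ‖LSeries f s‖ ≤ ‖LSeries (fun n => (g n : ℂ)) x‖ := by
  have hg0 (n : ℕ) : 0 ≤ g n := (norm_nonneg _).trans (hfg n)
  have hterm (n : ℕ) : ‖LSeries.term f s n‖ ≤ ‖LSeries.term (fun n => (g n : ℂ)) x n‖ := by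
    refine (LSeries.norm_term_le s ((hfg n).trans_eq ?_)).trans
      (LSeries.norm_term_le_of_re_le_re _ (by simpa using hx) n)
    rw [norm_real, Real.norm_of_nonneg (hg0 n)]
  rw [LSeries_ofReal_eq_tsum_norm hg0, norm_real,
    Real.norm_of_nonneg (tsum_nonneg fun n => norm_nonneg _)]
  exact tsum_of_norm_bounded hg.norm.hasSum hterm

theorem norm_LSeries_le_norm_riemannZeta {f : ℕ → ℂ} (hf : ∀ n, ‖f n‖ ≤ 1) {s : ℂ} {x : ℝ}
    (hx1 : 1 < x) (hx : x ≤ s.re) : ‖LSeries f s‖ ≤ ‖riemannZeta x‖ := by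
  have hx1' : 1 < (x : ℂ).re := by simpa using hx1
  have hone : (fun _ : ℕ => ((1 : ℝ) : ℂ)) = 1 := by ext; simp
  have h := norm_LSeries_le_norm_LSeries_ofReal (g := fun _ => 1) hf hx
    (by rw [hone]; exact LSeriesSummable_one_iff.mpr hx1')
  rwa [hone, LSeries_one_eq_riemannZeta hx1'] at h

theorem norm_riemannZeta_le {s : ℂ} {x : ℝ} (hx1 : 1 < x) (hx : x ≤ s.re) :
    ‖riemannZeta s‖ ≤ ‖riemannZeta x‖ := by
  rw [← LSeries_one_eq_riemannZeta (by linarith : 1 < s.re)]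
  exact norm_LSeries_le_norm_riemannZeta (by simp) hx1 hx

theorem one_le_norm_riemannZeta_mul {s : ℂ} {x : ℝ} (hx1 : 1 < x) (hx : x ≤ s.re) :
    1 ≤ ‖riemannZeta x‖ * ‖riemannZeta s‖ := by
  have hmoebius (n : ℕ) : ‖(ArithmeticFunction.moebius n : ℂ)‖ ≤ 1 := by
    rw [Complex.norm_intCast]
    exact_mod_cast ArithmeticFunction.abs_moebius_le_one
  have hs : 1 < s.re := by linarith
  calc (1 : ℝ) = ‖riemannZeta s * LSeries (fun n => (ArithmeticFunction.moebius n : ℂ)) s‖ := by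
        rw [← LSeries_one_eq_riemannZeta hs, LSeries_one_mul_Lseries_moebius hs, norm_one]
    _ ≤ ‖riemannZeta s‖ * ‖riemannZeta x‖ := by
        rw [norm_mul]
        gcongr
        exact norm_LSeries_le_norm_riemannZeta hmoebius hx1 hx
    _ = ‖riemannZeta x‖ * ‖riemannZeta s‖ := mul_comm _ _

theorem LSeriesSummable_totient {s : ℂ} (hs : 1 < s.re) :
    LSeriesSummable (fun n => ((Nat.totient n : ℝ) : ℂ)) (s + 1) := by
  refine LSeriesSummable_of_le_const_mul_rpow (x := 2) (by simp; linarith) ⟨1, fun n _ => ?_⟩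
  norm_num
  exact Nat.totient_le n

theorem LSeries_totient_mul_riemannZeta {s : ℂ} (hs : 1 < s.re) :
    LSeries (fun n => ((Nat.totient n : ℝ) : ℂ)) (s + 1) * riemannZeta (s + 1) =
      riemannZeta s := by
  have hs1 : 1 < (s + 1).re := by simp; linarith
  rw [← LSeries_one_eq_riemannZeta hs1, ← LSeries_one_eq_riemannZeta hs,
    ← LSeries_convolution' (LSeriesSummable_totient hs) (LSeriesSummable_one_iff.mpr hs1)]
  refine tsum_congr fun n => ?_
  rcases eq_or_ne n 0 with rfl | hn
  · simp
  have hn0 : (n : ℂ) ≠ 0 := by exact_mod_cast hn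
  have hsum : LSeries.convolution (fun n => ((Nat.totient n : ℝ) : ℂ)) 1 n = n := by
    simp only [LSeries.convolution_def, Pi.one_apply, mul_one]
    rw [Nat.sum_divisorsAntidiagonal (fun i _ => ((Nat.totient i : ℝ) : ℂ))]
    exact_mod_cast Nat.sum_totient n
  rw [LSeries.term_of_ne_zero hn, LSeries.term_of_ne_zero hn, hsum, cpow_add _ _ hn0,
    cpow_one, Pi.one_apply]
  have hpow : (n : ℂ) ^ s ≠ 0 := by simp [cpow_eq_zero_iff, hn0]
  field_simp

theorem norm_riemannZeta_mul_norm_riemannZeta_add_one_le {s : ℂ} {x : ℝ} (hx1 : 1 < x)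
    (hx : x ≤ s.re) :
    ‖riemannZeta s‖ * ‖riemannZeta (x + 1)‖ ≤ ‖riemannZeta x‖ * ‖riemannZeta (s + 1)‖ := by
  have hx1' : 1 < (x : ℂ).re := by simpa using hx1
  have htotient : ‖LSeries (fun n => ((Nat.totient n : ℝ) : ℂ)) (s + 1)‖ ≤
      ‖LSeries (fun n => ((Nat.totient n : ℝ) : ℂ)) (x + 1)‖ := by
    have hsum := LSeriesSummable_totient hx1'
    rw [← ofReal_one, ← ofReal_add] at hsum ⊢
    exact norm_LSeries_le_norm_LSeries_ofReal (by simp) (by simpa using hx) hsum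
  rw [← LSeries_totient_mul_riemannZeta (by linarith : 1 < s.re),
    ← LSeries_totient_mul_riemannZeta hx1', norm_mul, norm_mul, mul_right_comm]
  gcongr

theorem rpow_neg_sub_rpow_neg_le {x y c : ℝ} (hx : 0 < x) (hy : 0 < y) (hc : 0 < c) :
    x ^ (-c) - y ^ (-c) ≤ c * (y - x) * x ^ (-(c + 1)) := by
  have hyx : 0 < y / x := div_pos hy hx
  have hbernoulli : 1 - c * (y / x - 1) ≤ (y / x) ^ (-c) := by
    rw [Real.rpow_def_of_pos hyx]
    have hexp := Real.add_one_le_exp (Real.log (y / x) * -c)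
    have hlog := Real.log_le_sub_one_of_pos hyx
    nlinarith
  have hsucc : x ^ (-(c + 1)) = x ^ (-c) / x := by
    rw [neg_add, Real.rpow_add hx, Real.rpow_neg_one, div_eq_mul_inv]
  calc x ^ (-c) - y ^ (-c) = x ^ (-c) - x ^ (-c) * (y / x) ^ (-c) := by
        rw [← Real.mul_rpow hx.le hyx.le, mul_div_cancel₀ _ hx.ne']
    _ ≤ x ^ (-c) - x ^ (-c) * (1 - c * (y / x - 1)) := by gcongr
    _ = c * (y - x) * x ^ (-(c + 1)) := by
        rw [hsucc]
        field_simp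
        ring

theorem hasSum_norm_riemannZeta {c : ℝ} (hc : 0 < c) :
    HasSum (fun n : ℕ => (n + 1 : ℝ) ^ (-(c + 1))) ‖riemannZeta (c + 1 : ℝ)‖ := by
  have hsummable : Summable fun n : ℕ => (n + 1 : ℝ) ^ (-(c + 1)) := by
    simpa using (summable_nat_add_iff 1).mpr
      (Real.summable_nat_rpow (p := -(c + 1)) |>.mpr (by linarith))
  have hzeta : riemannZeta (c + 1 : ℝ) = ((∑' n : ℕ, (n + 1 : ℝ) ^ (-(c + 1)) : ℝ) : ℂ) := by
    rw [zeta_eq_tsum_one_div_nat_add_one_cpow (by simpa using hc), ofReal_tsum]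
    refine tsum_congr fun n => ?_
    rw [ofReal_cpow (by positivity), ofReal_neg, cpow_neg, one_div]
    push_cast
    rfl
  rw [hzeta, norm_real, Real.norm_of_nonneg (tsum_nonneg fun n => by positivity)]
  exact hsummable.hasSum

theorem tendsto_natCast_add_one_rpow_neg_div {c : ℝ} (hc : 0 < c) :
    Filter.Tendsto (fun n : ℕ => (n + 1 : ℝ) ^ (-c) / c) Filter.atTop (nhds 0) := by
  have hsucc : Filter.Tendsto (fun n : ℕ => (n + 1 : ℝ)) Filter.atTop Filter.atTop :=
    Filter.tendsto_atTop_add_const_right _ 1 tendsto_natCast_atTop_atTop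
  simpa using ((tendsto_rpow_neg_atTop hc).comp hsucc).div_const c

theorem norm_riemannZeta_le_sum_add {c : ℝ} (hc : 0 < c) (N : ℕ) :
    ‖riemannZeta (c + 1 : ℝ)‖ ≤
      ∑ n ∈ Finset.range (N + 1), (n + 1 : ℝ) ^ (-(c + 1)) + (N + 1 : ℝ) ^ (-c) / c := by
  have hanti : Antitone fun M : ℕ =>
      ∑ n ∈ Finset.range (M + 1), (n + 1 : ℝ) ^ (-(c + 1)) + (M + 1 : ℝ) ^ (-c) / c := by
    refine antitone_nat_of_succ_le fun n => ?_
    have htangent := rpow_neg_sub_rpow_neg_le (x := (n + 1 : ℕ) + 1) (y := n + 1) (by positivity)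
      (by positivity) hc
    rw [Finset.sum_range_succ _ (n + 1), add_assoc]
    gcongr
    rw [← le_sub_iff_add_le, ← sub_div, le_div_iff₀ hc]
    push_cast at htangent ⊢
    linarith
  have hsum := (Filter.tendsto_add_atTop_iff_nat 1).mpr (hasSum_norm_riemannZeta hc).tendsto_sum_nat
  have hlim := hsum.add (tendsto_natCast_add_one_rpow_neg_div hc)
  rw [add_zero] at hlim
  exact hanti.le_of_tendsto hlim N

theorem sum_add_le_norm_riemannZeta {c : ℝ} (hc : 0 < c) (N : ℕ) :
    ∑ n ∈ Finset.range N, (n + 1 : ℝ) ^ (-(c + 1)) + (N + 1 : ℝ) ^ (-c) / c ≤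
      ‖riemannZeta (c + 1 : ℝ)‖ := by
  have hmono : Monotone fun M : ℕ =>
      ∑ n ∈ Finset.range M, (n + 1 : ℝ) ^ (-(c + 1)) + (M + 1 : ℝ) ^ (-c) / c := by
    refine monotone_nat_of_le_succ fun n => ?_
    have htangent := rpow_neg_sub_rpow_neg_le (x := n + 1) (y := (n + 1 : ℕ) + 1) (by positivity)
      (by positivity) hc
    rw [Finset.sum_range_succ, add_assoc]
    gcongr
    rw [← sub_le_iff_le_add, ← sub_div, div_le_iff₀ hc]
    push_cast at htangent ⊢
    linarith
  have hlim := (hasSum_norm_riemannZeta hc).tendsto_sum_nat.add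
    (tendsto_natCast_add_one_rpow_neg_div hc)
  rw [add_zero] at hlim
  exact hmono.ge_of_tendsto hlim N

theorem rpow_neg_natCast_div_two {x : ℝ} (hx : 0 ≤ x) (k : ℕ) :
    x ^ (-(k / 2 : ℝ)) = (√x)⁻¹ ^ k := by
  rw [Real.rpow_neg hx, inv_pow, Real.sqrt_eq_rpow, ← Real.rpow_natCast, ← Real.rpow_mul hx]
  congr 2
  ring

theorem inv_sqrt_two_mem : (√2 : ℝ)⁻¹ ∈ Set.Icc (0.7071 : ℝ) 0.70711 := by
  rw [← Real.sqrt_inv]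
  exact ⟨Real.le_sqrt_of_sq_le (by norm_num), Real.sqrt_le_iff.mpr (by norm_num)⟩

theorem inv_sqrt_three_mem : (√3 : ℝ)⁻¹ ∈ Set.Icc (0.57735 : ℝ) 0.57736 := by
  rw [← Real.sqrt_inv]
  exact ⟨Real.le_sqrt_of_sq_le (by norm_num), Real.sqrt_le_iff.mpr (by norm_num)⟩

theorem inv_sqrt_four : (√4 : ℝ)⁻¹ = 0.5 := by
  rw [show (4 : ℝ) = 2 ^ 2 by norm_num, Real.sqrt_sq (by norm_num)]
  norm_num

theorem norm_riemannZeta_half_integer_le {k : ℕ} (hk : 0 < k) :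
    ‖riemannZeta (k / 2 + 1 : ℝ)‖ ≤
      1 + 0.70711 ^ (k + 2) + 0.57736 ^ (k + 2) + 0.5 ^ (k + 2) + 0.5 ^ k / (k / 2) := by
  have hexp : -(k / 2 + 1 : ℝ) = -((k + 2 : ℕ) / 2 : ℝ) := by push_cast; ring
  refine (norm_riemannZeta_le_sum_add (by positivity : (0 : ℝ) < k / 2) 3).trans ?_
  simp only [Finset.sum_range_succ, Finset.sum_range_zero, hexp]
  norm_num only [rpow_neg_natCast_div_two, inv_sqrt_four, one_pow, zero_add]
  gcongr
  · exact inv_sqrt_two_mem.2.trans_eq (by norm_num)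
  · exact inv_sqrt_three_mem.2.trans_eq (by norm_num)

theorem le_norm_riemannZeta_half_integer {k : ℕ} (hk : 0 < k) :
    1 + 0.7071 ^ (k + 2) + 0.57735 ^ (k + 2) + 0.5 ^ k / (k / 2) ≤
      ‖riemannZeta (k / 2 + 1 : ℝ)‖ := by
  have hexp : -(k / 2 + 1 : ℝ) = -((k + 2 : ℕ) / 2 : ℝ) := by push_cast; ring
  refine le_trans ?_ (sum_add_le_norm_riemannZeta (by positivity : (0 : ℝ) < k / 2) 3)
  simp only [Finset.sum_range_succ, Finset.sum_range_zero, hexp]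
  norm_num only [rpow_neg_natCast_div_two, inv_sqrt_four, one_pow, zero_add]
  gcongr
  · exact le_trans (by norm_num) inv_sqrt_two_mem.1
  · exact le_trans (by norm_num) inv_sqrt_three_mem.1

/-! ### Unit steps of `chi` -/

theorem norm_le_norm_of_im_eq {z w : ℂ} (him : z.im = w.im) (hre : |z.re| ≤ |w.re|) :
    ‖z‖ ≤ ‖w‖ := by
  rw [norm_def, norm_def, normSq_apply, normSq_apply, him]
  exact Real.sqrt_le_sqrt (by nlinarith [sq_le_sq.mpr hre])

theorem norm_Gammaℝ_pow_mul_gammaHalfStepWeight_le {w : ℂ} (hw : 0 < w.re) :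
    ‖Gammaℝ w‖ ^ 4 * gammaHalfStepWeight (w / 2) ≤ Real.pi ^ 2 * ‖Gammaℝ (w + 1)‖ ^ 4 := by
  have hpi := Real.pi_pos
  have hGamma := norm_Gamma_pow_mul_gammaHalfStepWeight_le (u := w / 2) (by simpa using hw)
  have hpow : (Real.pi ^ (-w.re / 2)) ^ 4 = Real.pi ^ 2 * (Real.pi ^ (-(w + 1).re / 2)) ^ 4 := by
    have hexp : -w.re / 2 = 1 / 2 + -(w + 1).re / 2 := by simp; ring
    rw [hexp, Real.rpow_add hpi, mul_pow, ← Real.sqrt_eq_rpow,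
      show √Real.pi ^ 4 = (√Real.pi ^ 2) ^ 2 by ring, Real.sq_sqrt hpi.le]
  rw [norm_Gammaℝ, norm_Gammaℝ, mul_pow, mul_pow, hpow, add_div w 1 2, ← mul_assoc]
  calc _ = Real.pi ^ 2 * (Real.pi ^ (-(w + 1).re / 2)) ^ 4 *
        (‖Gamma (w / 2)‖ ^ 4 * gammaHalfStepWeight (w / 2)) := by ring
    _ ≤ _ := by gcongr

theorem norm_Gammaℝ_le_mul_norm_Gammaℝ_add_one {w : ℂ} (hre : 3 / 2 ≤ w.re) (him : 29 ≤ |w.im|) :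
    ‖Gammaℝ w‖ ≤ 0.4655 * ‖Gammaℝ (w + 1)‖ := by
  have hweight : 210.3125 ≤ gammaHalfStepWeight (w / 2) := by
    have hsq : 29 ^ 2 ≤ w.im ^ 2 := by rw [← sq_abs w.im]; gcongr
    rw [gammaHalfStepWeight_eq, div_ofNat_re, div_ofNat_im]
    nlinarith
  have hpi : Real.pi ^ 2 ≤ 0.4655 ^ 4 * 210.3125 := by
    nlinarith [Real.pi_lt_d4, Real.pi_pos]
  refine le_of_pow_le_pow_left₀ four_ne_zero (by positivity) ?_
  refine le_of_mul_le_mul_right ?_ (by norm_num : (0 : ℝ) < 210.3125)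
  calc ‖Gammaℝ w‖ ^ 4 * 210.3125
      ≤ ‖Gammaℝ w‖ ^ 4 * gammaHalfStepWeight (w / 2) := by gcongr
    _ ≤ Real.pi ^ 2 * ‖Gammaℝ (w + 1)‖ ^ 4 :=
        norm_Gammaℝ_pow_mul_gammaHalfStepWeight_le (by linarith)
    _ ≤ 0.4655 ^ 4 * 210.3125 * ‖Gammaℝ (w + 1)‖ ^ 4 := by gcongr
    _ = (0.4655 * ‖Gammaℝ (w + 1)‖) ^ 4 * 210.3125 := by ring

theorem norm_chi_le_mul_norm_chi_add_one {w : ℂ} {x r : ℝ} (hx : 3 / 2 ≤ x) (hre : x ≤ w.re)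
    (him : 29 ≤ |w.im|) (hr : ‖riemannZeta x‖ ≤ r * ‖riemannZeta (x + 1)‖) :
    ‖chi w‖ ≤ 0.4655 * r * ‖chi (w + 1)‖ := by
  have hw0 : 0 < w.re := by linarith
  have hw1 : w ≠ 1 := by rintro rfl; norm_num at him
  have hw1' : w + 1 ≠ 1 := by simpa using ne_zero_of_re_pos hw0
  have hzeta : ‖riemannZeta w‖ ≤ r * ‖riemannZeta (w + 1)‖ := by
    have hpos : 0 < ‖riemannZeta (x + 1)‖ :=
      norm_pos_iff.mpr (riemannZeta_ne_zero_of_one_le_re (by simp; linarith))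
    refine le_of_mul_le_mul_right ?_ hpos
    calc ‖riemannZeta w‖ * ‖riemannZeta (x + 1)‖ ≤ ‖riemannZeta x‖ * ‖riemannZeta (w + 1)‖ :=
          norm_riemannZeta_mul_norm_riemannZeta_add_one_le (by linarith) hre
      _ ≤ r * ‖riemannZeta (x + 1)‖ * ‖riemannZeta (w + 1)‖ := by gcongr
      _ = r * ‖riemannZeta (w + 1)‖ * ‖riemannZeta (x + 1)‖ := by ring
  have hpoly : ‖w - 1‖ ≤ ‖w + 1‖ := norm_le_norm_of_im_eq (by simp) (by
    simp only [sub_re, add_re, one_re]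
    rw [abs_of_pos (by linarith), abs_of_pos (by linarith)]
    linarith)
  have hGamma := norm_Gammaℝ_le_mul_norm_Gammaℝ_add_one (hx.trans hre) him
  rw [chi_eq_mul_Gammaℝ_mul_riemannZeta hw0 hw1,
    chi_eq_mul_Gammaℝ_mul_riemannZeta (by simp; linarith) hw1', add_sub_cancel_right]
  simp only [norm_mul]
  calc ‖w‖ * ‖w - 1‖ * (‖Gammaℝ w‖ * ‖riemannZeta w‖)
      ≤ ‖w‖ * ‖w + 1‖ * (0.4655 * ‖Gammaℝ (w + 1)‖ * (r * ‖riemannZeta (w + 1)‖)) := by gcongr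
    _ = 0.4655 * r * (‖w + 1‖ * ‖w‖ * (‖Gammaℝ (w + 1)‖ * ‖riemannZeta (w + 1)‖)) := by ring

theorem norm_riemannZeta_half_integer_le_mul {k : ℕ} (hk : 0 < k) {r : ℝ} (hr : 0 ≤ r)
    (h : 1 + 0.70711 ^ (k + 2) + 0.57736 ^ (k + 2) + 0.5 ^ (k + 2) + 0.5 ^ k / (k / 2) ≤
      r * (1 + 0.7071 ^ (k + 4) + 0.57735 ^ (k + 4) + 0.5 ^ (k + 2) / ((k + 2) / 2))) :
    ‖riemannZeta (k / 2 + 1 : ℝ)‖ ≤ r * ‖riemannZeta ((k / 2 + 1 : ℝ) + 1)‖ := by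
  have hlower := le_norm_riemannZeta_half_integer (k := k + 2) (by positivity)
  rw [show (((k + 2 : ℕ) / 2 + 1 : ℝ) : ℂ) = (k / 2 + 1 : ℝ) + 1 by push_cast; ring,
    Nat.cast_add, Nat.cast_ofNat] at hlower
  calc ‖riemannZeta (k / 2 + 1 : ℝ)‖
      ≤ 1 + 0.70711 ^ (k + 2) + 0.57736 ^ (k + 2) + 0.5 ^ (k + 2) + 0.5 ^ k / (k / 2) :=
        norm_riemannZeta_half_integer_le hk
    _ ≤ _ := h
    _ ≤ r * ‖riemannZeta ((k / 2 + 1 : ℝ) + 1)‖ := by gcongr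

theorem norm_chi_le_of_half_integer_le_re {w : ℂ} (him : 29 ≤ |w.im|) {k : ℕ} (hk : 0 < k)
    (hre : k / 2 + 1 ≤ w.re) {r : ℝ} (hr : 0 ≤ r)
    (h : 1 + 0.70711 ^ (k + 2) + 0.57736 ^ (k + 2) + 0.5 ^ (k + 2) + 0.5 ^ k / (k / 2) ≤
      r * (1 + 0.7071 ^ (k + 4) + 0.57735 ^ (k + 4) + 0.5 ^ (k + 2) / ((k + 2) / 2))) :
    ‖chi w‖ ≤ 0.4655 * r * ‖chi (w + 1)‖ := by
  have hk1 : (1 : ℝ) ≤ k := by exact_mod_cast hk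
  exact norm_chi_le_mul_norm_chi_add_one (by linarith) hre him
    (norm_riemannZeta_half_integer_le_mul hk hr h)

theorem norm_chi_le_of_three_halves_le_re {w : ℂ} (him : 29 ≤ |w.im|) (hre : 3 / 2 ≤ w.re) :
    ‖chi w‖ ≤ 0.941 * ‖chi (w + 1)‖ :=
  (norm_chi_le_of_half_integer_le_re him (k := 1) (r := 0.941 / 0.4655) one_pos
    (by norm_num; exact hre) (by norm_num) (by norm_num)).trans_eq (by norm_num)

theorem norm_chi_le_of_two_le_re {w : ℂ} (him : 29 ≤ |w.im|) (hre : 2 ≤ w.re) :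
    ‖chi w‖ ≤ 0.6532 * ‖chi (w + 1)‖ :=
  (norm_chi_le_of_half_integer_le_re him (k := 2) (r := 0.6532 / 0.4655) two_pos
    (by norm_num; exact hre) (by norm_num) (by norm_num)).trans_eq (by norm_num)

theorem norm_chi_le_of_three_le_re {w : ℂ} (him : 29 ≤ |w.im|) (hre : 3 ≤ w.re) :
    ‖chi w‖ ≤ 0.5211 * ‖chi (w + 1)‖ :=
  (norm_chi_le_of_half_integer_le_re him (k := 4) (r := 0.5211 / 0.4655) four_pos
    (by norm_num; exact hre) (by norm_num) (by norm_num)).trans_eq (by norm_num)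

theorem norm_chi_le_of_four_le_re {w : ℂ} (him : 29 ≤ |w.im|) (hre : 4 ≤ w.re) :
    ‖chi w‖ ≤ 0.4874 * ‖chi (w + 1)‖ :=
  (norm_chi_le_of_half_integer_le_re him (k := 6) (r := 0.4874 / 0.4655) (by norm_num)
    (by norm_num; exact hre) (by norm_num) (by norm_num)).trans_eq (by norm_num)

/-! ### The reflection inequality for `chi` -/

theorem norm_cpow_smul_of_pos {E : Type*} [NormedAddCommGroup E] [NormedSpace ℂ E] {t : ℝ}
    (ht : 0 < t) (s : ℂ) (x : E) : ‖(t : ℂ) ^ (s - 1) • x‖ = t ^ (s.re - 1) * ‖x‖ := by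
  rw [norm_smul, norm_cpow_eq_rpow_re_of_pos ht, sub_re, one_re]

theorem norm_mellin_le_add {E : Type*} [NormedAddCommGroup E] [NormedSpace ℂ E] {f : ℝ → E}
    {a b : ℝ} (ha : MellinConvergent f a) (hb : MellinConvergent f b) {s : ℂ} (has : a ≤ s.re)
    (hsb : s.re ≤ b) :
    ‖mellin f s‖ ≤ (∫ t in Set.Ioi (0 : ℝ), ‖(t : ℂ) ^ ((a : ℂ) - 1) • f t‖) +
      ∫ t in Set.Ioi (0 : ℝ), ‖(t : ℂ) ^ ((b : ℂ) - 1) • f t‖ := by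
  rw [mellin, ← MeasureTheory.integral_add ha.norm hb.norm]
  refine MeasureTheory.norm_integral_le_of_norm_le (ha.norm.add hb.norm)
    (MeasureTheory.ae_restrict_of_forall_mem measurableSet_Ioi fun t ht => ?_)
  have ht0 : 0 < t := ht
  simp only [norm_cpow_smul_of_pos ht0, ofReal_re, ← add_mul]
  gcongr
  rcases le_total 1 t with h1 | h1
  · exact (Real.rpow_le_rpow_of_exponent_le h1 (by linarith)).trans
      (le_add_of_nonneg_left (by positivity))
  · exact (Real.rpow_le_rpow_of_exponent_ge ht0 h1 (by linarith)).trans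
      (le_add_of_nonneg_right (by positivity))

theorem exists_norm_completedRiemannZeta₀_le (a b : ℝ) :
    ∃ K, 0 ≤ K ∧ ∀ z : ℂ, a ≤ z.re → z.re ≤ b → ‖completedRiemannZeta₀ z‖ ≤ K := by
  set f := (HurwitzZeta.hurwitzEvenFEPair 0).f_modif
  have hconv (s : ℂ) : MellinConvergent f s :=
    ((HurwitzZeta.hurwitzEvenFEPair 0).isStrongFEPair_toStrongFEPair.hasMellin s).1
  have hmellin (z : ℂ) : completedRiemannZeta₀ z = mellin f (z / 2) / 2 := rfl
  refine ⟨((∫ t in Set.Ioi (0 : ℝ), ‖(t : ℂ) ^ (((a / 2 : ℝ) : ℂ) - 1) • f t‖) +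
    ∫ t in Set.Ioi (0 : ℝ), ‖(t : ℂ) ^ (((b / 2 : ℝ) : ℂ) - 1) • f t‖) / 2, by positivity,
    fun z haz hzb => ?_⟩
  rw [hmellin, norm_div, Complex.norm_ofNat]
  gcongr
  exact norm_mellin_le_add (hconv _) (hconv _) (by rw [div_ofNat_re]; gcongr)
    (by rw [div_ofNat_re]; gcongr)

theorem exists_norm_chi_le_mul_exp (a b : ℝ) :
    ∃ K, 0 ≤ K ∧ ∀ z : ℂ, a ≤ z.re → z.re ≤ b → ‖chi z‖ ≤ K * Real.exp (2 * ‖z‖) := by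
  obtain ⟨K, hK0, hK⟩ := exists_norm_completedRiemannZeta₀_le a b
  refine ⟨K + 1, by positivity, fun z haz hzb => ?_⟩
  have hsub : ‖z - 1‖ ≤ ‖z‖ + 1 := (norm_sub_le _ _).trans_eq (by rw [norm_one])
  have hexp : (‖z‖ + 1) ^ 2 ≤ Real.exp (2 * ‖z‖) := by
    rw [two_mul, Real.exp_add, ← sq]
    gcongr
    exact Real.add_one_le_exp _
  calc ‖chi z‖ ≤ ‖z‖ * ‖z - 1‖ * ‖completedRiemannZeta₀ z‖ + 1 := by
        rw [← norm_mul, ← norm_mul, ← norm_one (α := ℂ)]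
        exact norm_add_le _ _
    _ ≤ (‖z‖ + 1) * (‖z‖ + 1) * K + (‖z‖ + 1) ^ 2 := by
        gcongr
        · exact le_add_of_nonneg_right zero_le_one
        · exact hK z haz hzb
        · exact one_le_pow₀ (le_add_of_nonneg_left (norm_nonneg z))
    _ = (K + 1) * (‖z‖ + 1) ^ 2 := by ring
    _ ≤ (K + 1) * Real.exp (2 * ‖z‖) := by gcongr

theorem norm_riemannZeta_le_mul_norm_riemannZeta {z w : ℂ} {x : ℝ} (hx1 : 1 < x) (hz : x ≤ z.re)
    (hw : x ≤ w.re) : ‖riemannZeta z‖ ≤ ‖riemannZeta x‖ ^ 2 * ‖riemannZeta w‖ := by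
  calc ‖riemannZeta z‖ ≤ ‖riemannZeta x‖ * 1 := by
        rw [mul_one]
        exact norm_riemannZeta_le hx1 hz
    _ ≤ ‖riemannZeta x‖ * (‖riemannZeta x‖ * ‖riemannZeta w‖) := by
        gcongr
        exact one_le_norm_riemannZeta_mul hx1 hw
    _ = ‖riemannZeta x‖ ^ 2 * ‖riemannZeta w‖ := by ring

theorem norm_Gammaℝ_re_le {z : ℂ} (hz : 1 ≤ z.re) :
    ‖Gammaℝ z.re‖ ≤ Real.exp (Real.pi * |z.im| / 2) * ‖Gammaℝ z‖ := by
  have hlower := Gamma_re_mul_exp_le_norm_Gamma (z := z / 2) (by rw [div_ofNat_re]; linarith)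
  have habs : |(z / 2).im| = |z.im| / 2 := by rw [div_ofNat_im, abs_div, abs_two]
  rw [div_ofNat_re, habs, ← mul_div_assoc, Real.exp_neg, ← div_eq_mul_inv,
    div_le_iff₀' (Real.exp_pos _)] at hlower
  have hGamma : ‖Gamma (z.re / 2)‖ = Real.Gamma (z.re / 2) := by
    rw [← ofReal_ofNat, ← ofReal_div, Gamma_ofReal, norm_real,
      Real.norm_of_nonneg (Real.Gamma_pos_of_pos (by linarith)).le]
  rw [norm_Gammaℝ, norm_Gammaℝ, ofReal_re, hGamma, mul_left_comm]
  gcongr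

theorem norm_chi_re_le {c : ℝ} (hc : 1 < c) {z : ℂ} (hz : c ≤ z.re) :
    ‖chi z.re‖ ≤ ‖riemannZeta c‖ ^ 2 * Real.exp (Real.pi * |z.im| / 2) * ‖chi z‖ := by
  have hz1 : z ≠ 1 := by rintro rfl; simp only [one_re] at hz; linarith
  have hre1 : (z.re : ℂ) ≠ 1 := by rw [← ofReal_one, Ne, ofReal_inj]; linarith
  have hnorm : ‖(z.re : ℂ)‖ ≤ ‖z‖ := by rw [norm_real]; exact abs_re_le_norm z
  have hnorm_sub : ‖(z.re : ℂ) - 1‖ ≤ ‖z - 1‖ := by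
    rw [← ofReal_one, ← ofReal_sub, norm_real]
    simpa using abs_re_le_norm (z - 1)
  have hGamma := norm_Gammaℝ_re_le (by linarith : 1 ≤ z.re)
  have hzeta := norm_riemannZeta_le_mul_norm_riemannZeta hc (z := z.re) (w := z)
    (by simpa using hz) hz
  rw [chi_eq_mul_Gammaℝ_mul_riemannZeta (by linarith) hz1,
    chi_eq_mul_Gammaℝ_mul_riemannZeta (by simp; linarith) hre1]
  simp only [norm_mul]
  calc _ ≤ ‖z‖ * ‖z - 1‖ * (Real.exp (Real.pi * |z.im| / 2) * ‖Gammaℝ z‖ *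
        (‖riemannZeta c‖ ^ 2 * ‖riemannZeta z‖)) := by gcongr
    _ = _ := by ring

theorem exists_one_le_mul_norm_chi {a b : ℝ} (ha : 1 < a) :
    ∃ K, 0 ≤ K ∧ ∀ z : ℂ, a ≤ z.re → z.re ≤ b → 1 ≤ K * Real.exp (2 * ‖z‖) * ‖chi z‖ := by
  obtain ⟨m, hm0, hm⟩ := isCompact_Icc.exists_forall_le' (s := Set.Icc a b) (a := 0)
    (f := fun r : ℝ => ‖chi r‖)
    (differentiable_chi.continuous.comp continuous_ofReal).norm.continuousOn
    fun r hr => norm_pos_iff.mpr (chi_ne_zero_of_one_le_re (by simpa using ha.le.trans hr.1))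
  refine ⟨‖riemannZeta a‖ ^ 2 / m, by positivity, fun z haz hzb => ?_⟩
  have hexp : Real.pi * |z.im| / 2 ≤ 2 * ‖z‖ := by
    nlinarith [abs_im_le_norm z, Real.pi_lt_four, abs_nonneg z.im]
  rw [div_mul_eq_mul_div, div_mul_eq_mul_div, one_le_div hm0]
  calc m ≤ ‖chi z.re‖ := hm z.re ⟨haz, hzb⟩
    _ ≤ ‖riemannZeta a‖ ^ 2 * Real.exp (Real.pi * |z.im| / 2) * ‖chi z‖ := norm_chi_re_le ha haz
    _ ≤ ‖riemannZeta a‖ ^ 2 * Real.exp (2 * ‖z‖) * ‖chi z‖ := by gcongr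

theorem norm_chi_le_mul_norm_chi_add {z : ℂ} (hz : 4 ≤ z.re) {y : ℝ} (hy : 0 ≤ y) :
    ‖chi z‖ ≤ Real.pi ^ (y / 2) * ‖riemannZeta (2 : ℝ)‖ ^ 2 * ‖chi (z + y)‖ := by
  have hre : (z + y).re = z.re + y := by simp
  have hz1 : z ≠ 1 := by rintro rfl; norm_num at hz
  have hzy1 : z + y ≠ 1 := fun h => by rw [h, one_re] at hre; linarith
  have hnorm : ‖z‖ ≤ ‖z + y‖ := norm_le_norm_of_im_eq (by simp) <| by
    rw [hre, abs_of_nonneg (by linarith), abs_of_nonneg (by linarith)]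
    linarith
  have hnorm_sub : ‖z - 1‖ ≤ ‖z + y - 1‖ := norm_le_norm_of_im_eq (by simp) <| by
    rw [sub_re, sub_re, hre, one_re, abs_of_nonneg (by linarith), abs_of_nonneg (by linarith)]
    linarith
  have hGamma : ‖Gamma (z / 2)‖ ≤ ‖Gamma ((z + y) / 2)‖ := by
    have h := norm_Gamma_le_norm_Gamma_add (z := z / 2) (by rw [div_ofNat_re]; linarith)
      (by positivity : 0 ≤ y / 2)
    rwa [ofReal_div, ofReal_ofNat, ← add_div] at h
  have hpi : Real.pi ^ (-z.re / 2) = Real.pi ^ (y / 2) * Real.pi ^ (-(z + y).re / 2) := by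
    rw [← Real.rpow_add Real.pi_pos, hre]
    ring_nf
  have hzeta := norm_riemannZeta_le_mul_norm_riemannZeta one_lt_two (z := z) (w := z + y)
    (by linarith) (by linarith)
  rw [chi_eq_mul_Gammaℝ_mul_riemannZeta (by linarith) hz1,
    chi_eq_mul_Gammaℝ_mul_riemannZeta (by linarith) hzy1]
  simp only [norm_mul, norm_Gammaℝ, hpi]
  calc _ ≤ ‖z + y‖ * ‖z + y - 1‖ * (Real.pi ^ (y / 2) * Real.pi ^ (-(z + y).re / 2) *
        ‖Gamma ((z + y) / 2)‖ * (‖riemannZeta (2 : ℝ)‖ ^ 2 * ‖riemannZeta (z + y)‖)) := by gcongr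
    _ = _ := by ring

theorem exists_norm_chi_sub_le_of_add_three_le_re {c : ℝ} (hc : 1 ≤ c) :
    ∃ K, 0 ≤ K ∧ ∀ w : ℂ, c + 3 ≤ w.re → ‖chi (c - w)‖ ≤ K * ‖chi (c + w)‖ := by
  refine ⟨Real.pi ^ ((2 * c - 1) / 2) * ‖riemannZeta (2 : ℝ)‖ ^ 2, by positivity, fun w hw => ?_⟩
  have h := norm_chi_le_mul_norm_chi_add (z := 1 - (c - w)) (by simp; linarith)
    (by linarith : 0 ≤ 2 * c - 1)
  rw [chi_one_sub] at h
  convert h using 4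
  push_cast
  ring

theorem exists_norm_chi_sub_le_mul_exp {c : ℝ} (hc : 1 < c) :
    ∃ K, 0 ≤ K ∧ ∀ w : ℂ, 0 ≤ w.re → w.re ≤ c + 3 →
      ‖chi (c - w)‖ ≤ K * Real.exp (4 * ‖w‖) * ‖chi (c + w)‖ := by
  obtain ⟨K₁, hK₁, hupper⟩ := exists_norm_chi_le_mul_exp (-3) c
  obtain ⟨K₂, hK₂, hlower⟩ := exists_one_le_mul_norm_chi (b := 2 * c + 3) hc
  refine ⟨K₁ * K₂ * Real.exp (4 * c), by positivity, fun w hw0 hw => ?_⟩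
  have hnormc : ‖(c : ℂ)‖ = c := by rw [norm_real, Real.norm_of_nonneg (by linarith)]
  have hsub : ‖(c : ℂ) - w‖ ≤ c + ‖w‖ := (norm_sub_le _ _).trans_eq (by rw [hnormc])
  have hadd : ‖(c : ℂ) + w‖ ≤ c + ‖w‖ := (norm_add_le _ _).trans_eq (by rw [hnormc])
  calc ‖chi (c - w)‖ ≤ K₁ * Real.exp (2 * ‖(c : ℂ) - w‖) * 1 := by
        rw [mul_one]
        exact hupper _ (by simp; linarith) (by simpa using hw0)
    _ ≤ K₁ * Real.exp (2 * (c + ‖w‖)) * (K₂ * Real.exp (2 * ‖(c : ℂ) + w‖) * ‖chi (c + w)‖) := by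
        gcongr
        exact hlower _ (by simpa using hw0) (by simp; linarith)
    _ ≤ K₁ * Real.exp (2 * (c + ‖w‖)) * (K₂ * Real.exp (2 * (c + ‖w‖)) * ‖chi (c + w)‖) := by
        gcongr
    _ = K₁ * K₂ * Real.exp (4 * c) * Real.exp (4 * ‖w‖) * ‖chi (c + w)‖ := by
        rw [show 2 * (c + ‖w‖) = 2 * c + 2 * ‖w‖ by ring, show 4 * c = 2 * c + 2 * c by ring,
          show 4 * ‖w‖ = 2 * ‖w‖ + 2 * ‖w‖ by ring]
        simp only [Real.exp_add]
        ring

theorem norm_chi_sub_eq_norm_chi_add {c : ℝ} {w : ℂ} (hw : w.re = 0) :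
    ‖chi (c - w)‖ = ‖chi (c + w)‖ := by
  have hconj : (c : ℂ) - w = conj (c + w) := by apply Complex.ext <;> simp [hw]
  rw [hconj, chi_conj, norm_conj]

theorem norm_chi_sub_le_norm_chi_add_of_one_lt {c : ℝ} (hc : 1 < c) {w : ℂ} (hw : 0 ≤ w.re) :
    ‖chi (c - w)‖ ≤ ‖chi (c + w)‖ := by
  have hne (v : ℂ) (hv : 0 ≤ v.re) : chi (c + v) ≠ 0 :=
    chi_ne_zero_of_one_le_re (by simp; linarith)
  obtain ⟨K₁, hK₁, hfar⟩ := exists_norm_chi_sub_le_of_add_three_le_re hc.le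
  obtain ⟨K₂, hK₂, hnear⟩ := exists_norm_chi_sub_le_mul_exp hc
  suffices ‖chi (c - w) / chi (c + w)‖ ≤ 1 by
    rwa [norm_div, div_le_one (norm_pos_iff.mpr (hne w hw))] at this
  refine PhragmenLindelof.right_half_plane_of_bounded_on_real
    (f := fun v => chi (c - v) / chi (c + v)) (DifferentiableOn.diffContOnCl ?_)
    ⟨1, one_lt_two, 4, .of_bound (K₁ + K₂) ?_⟩ ?_ (fun x => ?_) hw
  · rw [closure_setOfPred_lt_re]
    intro v hv
    have := hne v hv
    have := differentiable_chi
    fun_prop (disch := assumption)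
  · filter_upwards [Filter.mem_inf_of_right (Filter.mem_principal_self _)] with v hv
    have hv0 : 0 ≤ v.re := le_of_lt hv
    rw [norm_div, Real.rpow_one, Real.norm_of_nonneg (Real.exp_pos _).le,
      div_le_iff₀ (norm_pos_iff.mpr (hne v hv0))]
    rcases le_total (c + 3) v.re with h | h
    · refine (hfar v h).trans ?_
      gcongr
      nlinarith [Real.one_le_exp (by positivity : 0 ≤ 4 * ‖v‖)]
    · refine (hnear v hv0 h).trans ?_
      gcongr
      linarith
  · refine Filter.isBoundedUnder_of_eventually_le (a := K₁) ?_
    filter_upwards [Filter.eventually_ge_atTop (c + 3)] with x hx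
    rw [norm_div]
    exact div_le_of_le_mul₀ (norm_nonneg _) hK₁ (hfar x (by simpa using hx))
  · rw [norm_div, norm_chi_sub_eq_norm_chi_add (by simp)]
    exact div_self_le_one _

theorem norm_chi_sub_le_norm_chi_add {c : ℝ} (hc : 1 ≤ c) {w : ℂ} (hw : 0 ≤ w.re) :
    ‖chi (c - w)‖ ≤ ‖chi (c + w)‖ := by
  have hcont := differentiable_chi.continuous
  have hclosed : IsClosed {c : ℝ | ‖chi (c - w)‖ ≤ ‖chi (c + w)‖} :=
    isClosed_le (by fun_prop) (by fun_prop)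
  refine closure_minimal (s := Set.Ioi 1)
    (fun c hc => norm_chi_sub_le_norm_chi_add_of_one_lt hc hw) hclosed ?_
  rwa [closure_Ioi]

theorem norm_chi_le_of_im_eq_neg {z w : ℂ} (him : z.im = -w.im) (hre : z.re ≤ w.re)
    (hsum : 2 ≤ z.re + w.re) : ‖chi z‖ ≤ ‖chi w‖ := by
  set c : ℝ := (z.re + w.re) / 2 with hc
  have h := norm_chi_sub_le_norm_chi_add (c := c) (by linarith) (w := w - c)
    (by rw [sub_re, ofReal_re]; linarith)
  have hz : (c : ℂ) - (w - c) = z := by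
    apply Complex.ext
    · simp only [sub_re, ofReal_re]
      linarith
    · simp [him]
  rwa [hz, add_sub_cancel] at h

theorem norm_chi_le_norm_chi_add_one {s : ℂ} (hs : 1 / 2 ≤ s.re) : ‖chi s‖ ≤ ‖chi (s + 1)‖ := by
  rw [← chi_one_sub]
  exact norm_chi_le_of_im_eq_neg (by simp) (by simp; linarith) (by simp; linarith)

/-! ### The quotient of `f2 (1 - s)` and `f2 s` -/

theorem le_sq_im {s : ℂ} (him : 29 ≤ |s.im|) : 841 ≤ s.im ^ 2 := by
  rw [← sq_abs]
  nlinarith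

theorem A_eq_ofReal : A = ((Real.pi / 3 - 1 : ℝ) : ℂ) := by
  rw [A]
  push_cast
  rfl

theorem le_norm_A_mul_add_three {s : ℂ} (hre : 1 / 2 ≤ s.re) (him : 29 ≤ |s.im|) :
    3.318 ≤ ‖A * s + 3‖ := by
  have hA : 0.04719 ≤ Real.pi / 3 - 1 := by linarith [Real.pi_gt_d6]
  have him_sq := le_sq_im him
  refine le_of_sq_le_sq ?_ (norm_nonneg _)
  rw [sq_norm_eq_re_sq_add_im_sq, A_eq_ofReal]
  simp only [add_re, re_ofReal_mul, re_ofNat, add_im, im_ofReal_mul, im_ofNat, add_zero, mul_pow]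
  calc (3.318 : ℝ) ^ 2 ≤ (0.04719 * (1 / 2) + 3) ^ 2 + 0.04719 ^ 2 * 841 := by norm_num
    _ ≤ _ := by gcongr

theorem norm_A_mul_one_sub_add_three_le {s : ℂ} (hre : 1 / 2 ≤ s.re) :
    ‖A * (1 - s) + 3‖ ≤ ‖A * s + 3‖ := by
  have hA : 0 ≤ Real.pi / 3 - 1 := by linarith [Real.pi_gt_three]
  rw [← norm_conj (A * s + 3)]
  refine norm_le_norm_of_im_eq ?_ ?_ <;> rw [A_eq_ofReal]
  · simp only [add_im, im_ofReal_mul, sub_im, one_im, zero_sub, conj_im, im_ofNat, add_zero,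
      mul_neg]
  · simp only [add_re, re_ofReal_mul, re_ofNat, sub_re, one_re, conj_re]
    rw [abs_of_nonneg (by positivity : 0 ≤ (Real.pi / 3 - 1) * s.re + 3), abs_le]
    constructor <;> nlinarith

theorem norm_sub_three_le {s : ℂ} (hre : 1 / 2 ≤ s.re) (him : 29 ≤ |s.im|) :
    ‖s - 3‖ ≤ 1.004 * ‖s - 1‖ := by
  refine le_of_sq_le_sq ?_ (by positivity)
  simp only [mul_pow, sq_norm_eq_re_sq_add_im_sq, sub_re, sub_im, one_re, one_im, re_ofNat,
    im_ofNat]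
  nlinarith [le_sq_im him]

theorem norm_add_one_le {s : ℂ} (him : 29 ≤ |s.im|) : ‖s + 1‖ ≤ 1.0535 * ‖s - 2‖ := by
  refine le_of_sq_le_sq ?_ (by positivity)
  simp only [mul_pow, sq_norm_eq_re_sq_add_im_sq, sub_re, sub_im, add_re, add_im, one_re, one_im,
    re_ofNat, im_ofNat]
  nlinarith [le_sq_im him, sq_nonneg (s.re - 29)]

theorem norm_sq_le_mul_norm_sub_one_sq {s : ℂ} (him : 29 ≤ |s.im|) :
    ‖s‖ ^ 2 ≤ 1.0355 * ‖s - 1‖ ^ 2 := by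
  simp only [sq_norm_eq_re_sq_add_im_sq, sub_re, sub_im, one_re, one_im]
  nlinarith [le_sq_im him, sq_nonneg (s.re - 29)]

theorem norm_add_two_mul_norm_sub_three_le {s : ℂ} (him : 29 ≤ |s.im|) :
    ‖s + 2‖ * ‖s - 3‖ ≤ 1.022 * ‖s - 1‖ ^ 2 := by
  suffices (‖s + 2‖ ^ 2 + ‖s - 3‖ ^ 2) / 2 ≤ 1.022 * ‖s - 1‖ ^ 2 by
    linarith [two_mul_le_add_sq ‖s + 2‖ ‖s - 3‖]
  simp only [sq_norm_eq_re_sq_add_im_sq, sub_re, sub_im, add_re, add_im, one_re, one_im, re_ofNat,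
    im_ofNat]
  nlinarith [le_sq_im him, sq_nonneg (s.re - 24)]

theorem norm_mul_norm_add_two_le {s : ℂ} (him : 29 ≤ |s.im|) :
    ‖s‖ * ‖s + 2‖ ≤ 1.0725 * ‖s - 1‖ ^ 2 := by
  suffices (‖s‖ ^ 2 + ‖s + 2‖ ^ 2) / 2 ≤ 1.0725 * ‖s - 1‖ ^ 2 by
    linarith [two_mul_le_add_sq ‖s‖ ‖s + 2‖]
  simp only [sq_norm_eq_re_sq_add_im_sq, sub_re, sub_im, add_re, add_im, one_re, one_im, re_ofNat,
    im_ofNat]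
  nlinarith [le_sq_im him, sq_nonneg (s.re - 29)]

/-- The summand of `f2 s / (s - 2)` that dominates the other two for large `|Im s|`; all the
estimates of `f2 s` and `f2 (1 - s)` are made relative to it. -/
noncomputable def f2Lead (s : ℂ) : ℂ := (A * s + 3) * (s - 1) ^ 2 * chi (s + 2)

theorem norm_f2Lead (s : ℂ) : ‖f2Lead s‖ = ‖A * s + 3‖ * ‖s - 1‖ ^ 2 * ‖chi (s + 2)‖ := by
  rw [f2Lead, norm_mul, norm_mul, norm_pow]

theorem ne_zero_of_le_abs_im {z : ℂ} (him : 29 ≤ |z.im|) : z ≠ 0 := by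
  rintro rfl
  norm_num at him

theorem norm_f2Lead_pos {s : ℂ} (hre : 1 / 2 ≤ s.re) (him : 29 ≤ |s.im|) : 0 < ‖f2Lead s‖ := by
  have hA := le_norm_A_mul_add_three hre him
  have hsub : s - 1 ≠ 0 := ne_zero_of_le_abs_im (by simpa using him)
  have hchi : chi (s + 2) ≠ 0 := chi_ne_zero_of_one_le_re (by simp; linarith)
  rw [norm_f2Lead]
  have := norm_pos_iff.mpr hsub
  have := norm_pos_iff.mpr hchi
  positivity

theorem norm_mul_chi_le_mul_norm_f2Lead {s p z : ℂ} {c r : ℝ}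
    (hp : ‖p‖ ≤ c * (‖A * s + 3‖ * ‖s - 1‖ ^ 2)) (hz : ‖chi z‖ ≤ r * ‖chi (s + 2)‖) :
    ‖p * chi z‖ ≤ c * r * ‖f2Lead s‖ := by
  rw [norm_mul, norm_f2Lead]
  calc ‖p‖ * ‖chi z‖ ≤ (c * (‖A * s + 3‖ * ‖s - 1‖ ^ 2)) * (r * ‖chi (s + 2)‖) := by
        gcongr
        exact (norm_nonneg p).trans hp
    _ = _ := by ring

theorem norm_two_mul_sub_one_mul_sub_three_le {s : ℂ} (hre : 1 / 2 ≤ s.re) (him : 29 ≤ |s.im|) :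
    ‖2 * (s - 1) * (s - 3)‖ ≤ 0.6053 * (‖A * s + 3‖ * ‖s - 1‖ ^ 2) := by
  rw [norm_mul, norm_mul, norm_ofNat]
  calc 2 * ‖s - 1‖ * ‖s - 3‖ ≤ 2 * ‖s - 1‖ * (1.004 * ‖s - 1‖) := by
        gcongr
        exact norm_sub_three_le hre him
    _ = 2.008 * ‖s - 1‖ ^ 2 := by ring
    _ ≤ 0.6053 * ‖A * s + 3‖ * ‖s - 1‖ ^ 2 := by
        gcongr
        linarith [le_norm_A_mul_add_three hre him]
    _ = _ := by ring

theorem norm_add_two_mul_sub_three_le {s : ℂ} (hre : 1 / 2 ≤ s.re) (him : 29 ≤ |s.im|) :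
    ‖(s + 2) * (s - 3)‖ ≤ 0.3081 * (‖A * s + 3‖ * ‖s - 1‖ ^ 2) := by
  rw [norm_mul]
  calc ‖s + 2‖ * ‖s - 3‖ ≤ 1.022 * ‖s - 1‖ ^ 2 := norm_add_two_mul_norm_sub_three_le him
    _ ≤ 0.3081 * ‖A * s + 3‖ * ‖s - 1‖ ^ 2 := by
        gcongr
        linarith [le_norm_A_mul_add_three hre him]
    _ = _ := by ring

theorem norm_two_mul_mul_add_two_le {s : ℂ} (hre : 1 / 2 ≤ s.re) (him : 29 ≤ |s.im|) :
    ‖2 * s * (s + 2)‖ ≤ 0.6466 * (‖A * s + 3‖ * ‖s - 1‖ ^ 2) := by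
  rw [norm_mul, norm_mul, norm_ofNat, mul_assoc]
  calc 2 * (‖s‖ * ‖s + 2‖) ≤ 2 * (1.0725 * ‖s - 1‖ ^ 2) :=
        mul_le_mul_of_nonneg_left (norm_mul_norm_add_two_le him) zero_le_two
    _ = 2.145 * ‖s - 1‖ ^ 2 := by ring
    _ ≤ 0.6466 * ‖A * s + 3‖ * ‖s - 1‖ ^ 2 := by
        gcongr
        linarith [le_norm_A_mul_add_three hre him]
    _ = _ := by ring

theorem norm_A_mul_one_sub_add_three_mul_sq_le {s : ℂ} (hre : 1 / 2 ≤ s.re) (him : 29 ≤ |s.im|) :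
    ‖(A * (1 - s) + 3) * s ^ 2‖ ≤ 1.0355 * (‖A * s + 3‖ * ‖s - 1‖ ^ 2) := by
  rw [norm_mul, norm_pow]
  calc ‖A * (1 - s) + 3‖ * ‖s‖ ^ 2 ≤ ‖A * s + 3‖ * (1.0355 * ‖s - 1‖ ^ 2) := by
        gcongr
        · exact norm_A_mul_one_sub_add_three_le hre
        · exact norm_sq_le_mul_norm_sub_one_sq him
    _ = _ := by ring

theorem norm_sub_two_mul_le_norm_f2 {s : ℂ} (hre : 1 / 2 ≤ s.re) (him : 29 ≤ |s.im|) {q m : ℝ}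
    (hq : ‖chi (s + 1)‖ ≤ q * ‖chi (s + 2)‖) (hm : ‖chi s‖ ≤ m * ‖chi (s + 2)‖) :
    ‖s - 2‖ * ((1 - 0.6053 * q - 0.3081 * m) * ‖f2Lead s‖) ≤ ‖f2 s‖ := by
  have hmid := norm_mul_chi_le_mul_norm_f2Lead (norm_two_mul_sub_one_mul_sub_three_le hre him) hq
  have hlast := norm_mul_chi_le_mul_norm_f2Lead (norm_add_two_mul_sub_three_le hre him) hm
  rw [f2, norm_mul, ← f2Lead]
  gcongr
  have h₁ := norm_sub_norm_le (f2Lead s - 2 * (s - 1) * (s - 3) * chi (s + 1))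
    ((s + 2) * (s - 3) * chi s)
  have h₂ := norm_sub_norm_le (f2Lead s) (2 * (s - 1) * (s - 3) * chi (s + 1))
  linarith

theorem f2_one_sub (s : ℂ) :
    f2 (1 - s) = -((s + 1) * ((A * (1 - s) + 3) * s ^ 2 * chi (3 - s)
      - 2 * s * (s + 2) * chi (2 - s) - (s + 2) * (s - 3) * chi s)) := by
  rw [f2, chi_one_sub, show 1 - s + 2 = 3 - s by ring, show 1 - s + 1 = 2 - s by ring]
  ring

theorem norm_f2_one_sub_le {s : ℂ} (hre : 1 / 2 ≤ s.re) (him : 29 ≤ |s.im|) {m r₂ r₃ : ℝ}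
    (hm : ‖chi s‖ ≤ m * ‖chi (s + 2)‖) (hr₂ : ‖chi (2 - s)‖ ≤ r₂ * ‖chi (s + 2)‖)
    (hr₃ : ‖chi (3 - s)‖ ≤ r₃ * ‖chi (s + 2)‖) :
    ‖f2 (1 - s)‖ ≤ ‖s + 1‖ * ((1.0355 * r₃ + 0.6466 * r₂ + 0.3081 * m) * ‖f2Lead s‖) := by
  have hfirst := norm_mul_chi_le_mul_norm_f2Lead
    (norm_A_mul_one_sub_add_three_mul_sq_le hre him) hr₃
  have hmid := norm_mul_chi_le_mul_norm_f2Lead (norm_two_mul_mul_add_two_le hre him) hr₂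
  have hlast := norm_mul_chi_le_mul_norm_f2Lead (norm_add_two_mul_sub_three_le hre him) hm
  rw [f2_one_sub, norm_neg, norm_mul]
  gcongr
  refine (norm_sub_le _ _).trans ?_
  linarith [norm_sub_le ((A * (1 - s) + 3) * s ^ 2 * chi (3 - s)) (2 * s * (s + 2) * chi (2 - s))]

theorem norm_f2_one_sub_le_mul_norm_f2 {s : ℂ} (hre : 1 / 2 ≤ s.re) (him : 29 ≤ |s.im|)
    {q m r₂ r₃ B : ℝ} (hq : ‖chi (s + 1)‖ ≤ q * ‖chi (s + 2)‖)
    (hm : ‖chi s‖ ≤ m * ‖chi (s + 2)‖) (hr₂ : ‖chi (2 - s)‖ ≤ r₂ * ‖chi (s + 2)‖)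
    (hr₃ : ‖chi (3 - s)‖ ≤ r₃ * ‖chi (s + 2)‖) (hB0 : 0 ≤ B)
    (hB : 1.0535 * (1.0355 * r₃ + 0.6466 * r₂ + 0.3081 * m) ≤
      B * (1 - 0.6053 * q - 0.3081 * m)) :
    ‖f2 (1 - s)‖ ≤ B * ‖f2 s‖ := by
  have hlower := norm_sub_two_mul_le_norm_f2 hre him hq hm
  have hupper := norm_f2_one_sub_le hre him hm hr₂ hr₃
  have hchi : 0 < ‖chi (s + 2)‖ := norm_pos_iff.mpr (chi_ne_zero_of_one_le_re (by simp; linarith))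
  have hm0 := nonneg_of_mul_nonneg_left ((norm_nonneg _).trans hm) hchi
  have hr₂0 := nonneg_of_mul_nonneg_left ((norm_nonneg _).trans hr₂) hchi
  have hr₃0 := nonneg_of_mul_nonneg_left ((norm_nonneg _).trans hr₃) hchi
  calc ‖f2 (1 - s)‖
      ≤ ‖s + 1‖ * ((1.0355 * r₃ + 0.6466 * r₂ + 0.3081 * m) * ‖f2Lead s‖) := hupper
    _ ≤ 1.0535 * ‖s - 2‖ * ((1.0355 * r₃ + 0.6466 * r₂ + 0.3081 * m) * ‖f2Lead s‖) := by
        gcongr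
        exact norm_add_one_le him
    _ = 1.0535 * (1.0355 * r₃ + 0.6466 * r₂ + 0.3081 * m) * (‖s - 2‖ * ‖f2Lead s‖) := by ring
    _ ≤ B * (1 - 0.6053 * q - 0.3081 * m) * (‖s - 2‖ * ‖f2Lead s‖) := by gcongr
    _ = B * (‖s - 2‖ * ((1 - 0.6053 * q - 0.3081 * m) * ‖f2Lead s‖)) := by ring
    _ ≤ B * ‖f2 s‖ := by gcongr

theorem chi_two_sub (s : ℂ) : chi (2 - s) = chi (s - 1) := by
  rw [← chi_one_sub]
  ring_nf

theorem chi_three_sub (s : ℂ) : chi (3 - s) = chi (s - 2) := by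
  rw [← chi_one_sub]
  ring_nf

theorem norm_chi_le_mul_mul {w : ℂ} {a b : ℝ} (ha : 0 ≤ a) (h₁ : ‖chi w‖ ≤ a * ‖chi (w + 1)‖)
    {z : ℂ} (h₂ : ‖chi (w + 1)‖ ≤ b * ‖chi z‖) : ‖chi w‖ ≤ a * b * ‖chi z‖ := by
  rw [mul_assoc]
  exact h₁.trans (by gcongr)

theorem norm_chi_add_one_le_of_half_le_re {s : ℂ} (hre : 1 / 2 ≤ s.re) (him : 29 ≤ |s.im|) :
    ‖chi (s + 1)‖ ≤ 0.941 * ‖chi (s + 2)‖ := by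
  have h := norm_chi_le_of_three_halves_le_re (w := s + 1) (by simpa using him) (by simp; linarith)
  rwa [show s + 1 + 1 = s + 2 by ring] at h

theorem f2_ne_zero {s : ℂ} (hre : 1 / 2 ≤ s.re) (him : 29 ≤ |s.im|) : f2 s ≠ 0 := by
  have hq := norm_chi_add_one_le_of_half_le_re hre him
  have hlower := norm_sub_two_mul_le_norm_f2 hre him hq
    ((norm_chi_le_norm_chi_add_one hre).trans hq)
  have hlead := norm_f2Lead_pos hre him
  have hsub : 0 < ‖s - 2‖ := norm_pos_iff.mpr (ne_zero_of_le_abs_im (by simpa using him))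
  refine norm_pos_iff.mp (lt_of_lt_of_le ?_ hlower)
  exact mul_pos hsub (mul_pos (by norm_num) hlead)

theorem norm_f2_one_sub_le_of_half_le_re {s : ℂ} (hre : 1 / 2 ≤ s.re) (him : 29 ≤ |s.im|) :
    ‖f2 (1 - s)‖ ≤ 15 * ‖f2 s‖ := by
  have hq := norm_chi_add_one_le_of_half_le_re hre him
  have hm := (norm_chi_le_norm_chi_add_one hre).trans hq
  have hr₂ : ‖chi (2 - s)‖ ≤ _ := (norm_chi_le_of_im_eq_neg (w := s + 1) (by simp)
    (by simp; linarith) (by simp; linarith)).trans hq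
  have hr₃ : ‖chi (3 - s)‖ ≤ 1 * ‖chi (s + 2)‖ := by
    rw [one_mul]
    exact norm_chi_le_of_im_eq_neg (by simp) (by simp; linarith) (by simp; linarith)
  exact norm_f2_one_sub_le_mul_norm_f2 hre him hq hm hr₂ hr₃ (by norm_num) (by norm_num)

theorem norm_f2_one_sub_le_of_one_le_re {s : ℂ} (hre : 1 ≤ s.re) (him : 29 ≤ |s.im|) :
    ‖f2 (1 - s)‖ ≤ 3.5 * ‖f2 s‖ := by
  have hadd : s + 1 + 1 = s + 2 := by ring
  have hq := norm_chi_le_of_two_le_re (w := s + 1) (by simpa using him) (by simp; linarith)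
  rw [hadd] at hq
  have hm := (norm_chi_le_norm_chi_add_one (by linarith)).trans hq
  have hr₂ : ‖chi (2 - s)‖ ≤ _ := (norm_chi_le_of_im_eq_neg (w := s + 1) (by simp)
    (by simp; linarith) (by simp; linarith)).trans hq
  have hr₃ : ‖chi (3 - s)‖ ≤ _ := (norm_chi_le_of_im_eq_neg (w := s + 1) (by simp)
    (by simp; linarith) (by simp; linarith)).trans hq
  exact norm_f2_one_sub_le_mul_norm_f2 (by linarith) him hq hm hr₂ hr₃ (by norm_num)
    (by norm_num)

theorem norm_f2_one_sub_le_of_two_le_re {s : ℂ} (hre : 2 ≤ s.re) (him : 29 ≤ |s.im|) :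
    ‖f2 (1 - s)‖ ≤ 1.6 * ‖f2 s‖ := by
  have hadd : s + 1 + 1 = s + 2 := by ring
  have hq := norm_chi_le_of_three_le_re (w := s + 1) (by simpa using him) (by simp; linarith)
  rw [hadd] at hq
  have hm := norm_chi_le_mul_mul (by norm_num) (norm_chi_le_of_two_le_re him hre) hq
  have hr₂ : ‖chi (2 - s)‖ ≤ _ := (norm_chi_le_of_im_eq_neg (w := s) (by simp)
    (by simp; linarith) (by simp)).trans hm
  have hr₃ : ‖chi (3 - s)‖ ≤ _ := (norm_chi_le_of_im_eq_neg (w := s) (by simp)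
    (by simp; linarith) (by norm_num)).trans hm
  exact norm_f2_one_sub_le_mul_norm_f2 (by linarith) him hq hm hr₂ hr₃ (by norm_num)
    (by norm_num)

theorem norm_f2_one_sub_le_of_three_le_re {s : ℂ} (hre : 3 ≤ s.re) (him : 29 ≤ |s.im|) :
    ‖f2 (1 - s)‖ ≤ 0.68 * ‖f2 s‖ := by
  have hadd : s + 1 + 1 = s + 2 := by ring
  have hq := norm_chi_le_of_three_le_re (w := s + 1) (by simpa using him) (by simp; linarith)
  rw [hadd] at hq
  have hm := norm_chi_le_mul_mul (by norm_num) (norm_chi_le_of_three_le_re him hre) hq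
  have hprev := norm_chi_le_of_two_le_re (w := s - 1) (by simpa using him) (by simp; linarith)
  have hr₂ := norm_chi_le_mul_mul (by norm_num) hprev (by rwa [sub_add_cancel])
  have hr₃ : ‖chi (3 - s)‖ ≤ _ := (norm_chi_le_of_im_eq_neg (w := s - 1) (by simp)
    (by simp; linarith) (by simp; linarith)).trans hr₂
  rw [← chi_two_sub] at hr₂
  exact norm_f2_one_sub_le_mul_norm_f2 (by linarith) him hq hm hr₂ hr₃ (by norm_num)
    (by norm_num)

theorem norm_f2_one_sub_le_of_five_le_re {s : ℂ} (hre : 5 ≤ s.re) (him : 29 ≤ |s.im|) :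
    ‖f2 (1 - s)‖ ≤ 0.352 * ‖f2 s‖ := by
  have hadd : s + 1 + 1 = s + 2 := by ring
  have hsub : s - 2 + 1 = s - 1 := by ring
  have hq := norm_chi_le_of_four_le_re (w := s + 1) (by simpa using him) (by simp; linarith)
  rw [hadd] at hq
  have hm := norm_chi_le_mul_mul (by norm_num) (norm_chi_le_of_four_le_re him (by linarith)) hq
  have hprev := norm_chi_le_of_four_le_re (w := s - 1) (by simpa using him) (by simp; linarith)
  have hr₂ := norm_chi_le_mul_mul (by norm_num) hprev (by rwa [sub_add_cancel])
  have hprev₂ := norm_chi_le_of_three_le_re (w := s - 2) (by simpa using him) (by simp; linarith)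
  have hr₃ := norm_chi_le_mul_mul (by norm_num) hprev₂ (by rwa [hsub])
  rw [← chi_two_sub] at hr₂
  rw [← chi_three_sub] at hr₃
  exact norm_f2_one_sub_le_mul_norm_f2 (by linarith) him hq hm hr₂ hr₃ (by norm_num)
    (by norm_num)

/-! ### The maximum principle on a half-disc -/

theorem norm_one_add_sq_le_one {u : ℂ} (hre : u.re = 0) (hu : ‖u‖ ≤ 1) : ‖1 + u ^ 2‖ ≤ 1 := by
  have hu_eq : u = u.im * I := by apply Complex.ext <;> simp [hre]
  have him : u.im ^ 2 ≤ 1 := by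
    rw [sq_le_one_iff_abs_le_one]
    exact (abs_im_le_norm u).trans hu
  have h : 1 + u ^ 2 = ((1 - u.im ^ 2 : ℝ) : ℂ) := by
    conv_lhs => rw [hu_eq, mul_pow, I_sq]
    push_cast
    ring
  rw [h, norm_real, Real.norm_of_nonneg (by linarith)]
  linarith [sq_nonneg u.im]

theorem norm_one_add_sq_of_norm_eq_one {u : ℂ} (hre : 0 ≤ u.re) (hu : ‖u‖ = 1) :
    ‖1 + u ^ 2‖ = 2 * u.re := by
  have h : 1 + u ^ 2 = u * ((2 * u.re : ℝ) : ℂ) := by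
    rw [← add_conj, mul_add, mul_conj, normSq_eq_norm_sq, hu]
    push_cast
    ring
  rw [h, norm_mul, hu, norm_real, Real.norm_of_nonneg (by positivity), one_mul]

theorem norm_le_of_forall_boundary_half_disc {F : ℂ → ℂ} {M : ℝ}
    (hd : ∀ u : ℂ, 0 ≤ u.re → ‖u‖ ≤ 1 → DifferentiableAt ℂ F u)
    (hdiam : ∀ u : ℂ, u.re = 0 → ‖u‖ ≤ 1 → ‖F u‖ ≤ M)
    (harc : ∀ u : ℂ, 0 < u.re → ‖u‖ = 1 → ‖F u‖ ≤ M) {u : ℂ} (hre : 0 ≤ u.re) (hu : ‖u‖ ≤ 1) :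
    ‖F u‖ ≤ M := by
  set U : Set ℂ := {u | 0 < u.re} ∩ Metric.ball 0 1
  set V : Set ℂ := {u | 0 ≤ u.re} ∩ Metric.closedBall 0 1
  have hUV : closure U ⊆ V := closure_minimal
    (Set.inter_subset_inter (fun v (h : 0 < v.re) => (h.le : 0 ≤ v.re))
      Metric.ball_subset_closedBall)
    ((isClosed_le continuous_const continuous_re).inter Metric.isClosed_closedBall)
  have hUo : IsOpen U := (isOpen_lt continuous_const continuous_re).inter Metric.isOpen_ball
  have hdiff : DiffContOnCl ℂ F U := DifferentiableOn.diffContOnCl fun v hv =>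
    (hd v (hUV hv).1 (by simpa using (hUV hv).2)).differentiableWithinAt
  have hVU (v : ℂ) (hv : 0 ≤ v.re) (hv1 : ‖v‖ ≤ 1) (hvU : v ∉ U) : ‖F v‖ ≤ M := by
    rcases hv.eq_or_lt with h | h
    · exact hdiam v h.symm hv1
    · exact harc v h (hv1.antisymm (not_lt.mp fun h1 => hvU ⟨h, by simpa using h1⟩))
  by_cases huU : u ∈ U
  · refine norm_le_of_forall_mem_frontier_norm_le (Metric.isBounded_ball.subset
      Set.inter_subset_right) hdiff (fun v hv => ?_) (subset_closure huU)
    rw [hUo.frontier_eq] at hv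
    exact hVU v (hUV hv.1).1 (by simpa using (hUV hv.1).2) hv.2
  · exact hVU u hre hu huU

/- The auxiliary factor `1 + u ^ 2` has modulus at most `1` on the diameter and exactly `2 * u.re`
on the arc, so `g` may be large where the arc meets the diameter. -/
theorem norm_lt_one_of_half_disc {g : ℂ → ℂ} {a b : ℕ} (hb : b ≠ 0)
    (hd : ∀ u : ℂ, 0 ≤ u.re → ‖u‖ ≤ 1 → DifferentiableAt ℂ g u)
    (hdiam : ∀ u : ℂ, u.re = 0 → ‖u‖ ≤ 1 → ‖g u‖ ≤ 1)
    (harc : ∀ u : ℂ, 0 < u.re → ‖u‖ = 1 → ‖g u‖ ^ a * (2 * u.re) ^ b ≤ 1) {x : ℝ} (hx : 0 < x)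
    (hx1 : x ≤ 1) : ‖g x‖ < 1 := by
  have hprod := norm_le_of_forall_boundary_half_disc (F := fun u => g u ^ a * (1 + u ^ 2) ^ b)
    (M := 1) (u := x) (fun u hre hu => ?_) (fun u hre hu => ?_) (fun u hre hu => ?_)
    (by simpa using hx.le) (by rwa [norm_real, Real.norm_of_nonneg hx.le])
  · have hfactor : ‖1 + (x : ℂ) ^ 2‖ = 1 + x ^ 2 := by
      rw [← ofReal_pow, ← ofReal_one, ← ofReal_add, norm_real, Real.norm_of_nonneg (by positivity)]
    rw [norm_mul, norm_pow, norm_pow, hfactor] at hprod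
    by_contra! hg
    have h₁ : 1 < (1 + x ^ 2) ^ b := one_lt_pow₀ (by nlinarith) hb
    exact hprod.not_gt (one_lt_mul_of_le_of_lt (one_le_pow₀ hg) h₁)
  · have := hd u hre hu
    fun_prop
  · rw [norm_mul, norm_pow, norm_pow]
    exact mul_le_one₀ (pow_le_one₀ (norm_nonneg _) (hdiam u hre hu)) (by positivity)
      (pow_le_one₀ (norm_nonneg _) (norm_one_add_sq_le_one hre hu))
  · rw [norm_mul, norm_pow, norm_pow, norm_one_add_sq_of_norm_eq_one hre.le hu]
    exact harc u hre hu

theorem differentiable_f2 : Differentiable ℂ f2 := by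
  have := differentiable_chi
  unfold f2
  fun_prop

theorem f2_conj (s : ℂ) : f2 (conj s) = conj (f2 s) := by
  have h₁ : conj s + 1 = conj (s + 1) := by rw [map_add, map_one]
  have h₂ : conj s + 2 = conj (s + 2) := by rw [map_add, map_ofNat]
  rw [f2, f2, h₁, h₂, chi_conj, chi_conj, chi_conj, A_eq_ofReal]
  simp only [map_mul, map_sub, map_add, map_pow, map_ofNat, map_one, conj_ofReal]

theorem norm_f2_one_sub_of_re_eq_half {s : ℂ} (hs : s.re = 1 / 2) : ‖f2 (1 - s)‖ = ‖f2 s‖ := by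
  have h : 1 - s = conj s := by
    apply Complex.ext
    · rw [sub_re, one_re, conj_re, hs]
      norm_num
    · simp
  rw [h, f2_conj, norm_conj]

theorem exists_norm_f2_one_sub_le_mul {s : ℂ} (hre : 1 / 2 ≤ s.re) (hre' : s.re ≤ 15 / 2)
    (him : 29 ≤ |s.im|) :
    ∃ B, 0 ≤ B ∧ ‖f2 (1 - s)‖ ≤ B * ‖f2 s‖ ∧ B ^ 2 * (2 * ((s.re - 1 / 2) / 7)) ^ 3 ≤ 1 := by
  have hbound {B σ : ℝ} (hσ : s.re ≤ σ) (hB : B ^ 2 * (2 * ((σ - 1 / 2) / 7)) ^ 3 ≤ 1) :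
      B ^ 2 * (2 * ((s.re - 1 / 2) / 7)) ^ 3 ≤ 1 := by
    have : 0 ≤ s.re - 1 / 2 := by linarith
    exact le_trans (by gcongr) hB
  rcases le_total s.re 1 with h₁ | h₁
  · exact ⟨15, by norm_num, norm_f2_one_sub_le_of_half_le_re hre him, hbound h₁ (by norm_num)⟩
  rcases le_total s.re 2 with h₂ | h₂
  · exact ⟨3.5, by norm_num, norm_f2_one_sub_le_of_one_le_re h₁ him, hbound h₂ (by norm_num)⟩
  rcases le_total s.re 3 with h₃ | h₃
  · exact ⟨1.6, by norm_num, norm_f2_one_sub_le_of_two_le_re h₂ him, hbound h₃ (by norm_num)⟩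
  rcases le_total s.re 5 with h₅ | h₅
  · exact ⟨0.68, by norm_num, norm_f2_one_sub_le_of_three_le_re h₃ him, hbound h₅ (by norm_num)⟩
  · exact ⟨0.352, by norm_num, norm_f2_one_sub_le_of_five_le_re h₅ him, hbound hre' (by norm_num)⟩

theorem norm_f2_one_sub_lt_of_re_le {s : ℂ} (hre : 1 / 2 < s.re) (hre' : s.re ≤ 15 / 2)
    (him : 36 ≤ |s.im|) : ‖f2 (1 - s)‖ < ‖f2 s‖ := by
  set z : ℂ → ℂ := fun u => ⟨1 / 2, s.im⟩ + 7 * u with hz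
  have hz_re (u : ℂ) : (z u).re = 1 / 2 + 7 * u.re := by simp [hz]
  have hz_im {u : ℂ} (hu : ‖u‖ ≤ 1) : 29 ≤ |(z u).im| := by
    have himu := (abs_im_le_norm u).trans hu
    have h := abs_sub_abs_le_abs_add s.im (7 * u.im)
    rw [abs_mul, abs_of_pos (by norm_num : (0 : ℝ) < 7)] at h
    have : (z u).im = s.im + 7 * u.im := by simp [hz]
    rw [this]
    linarith
  have hf2 {u : ℂ} (hu0 : 0 ≤ u.re) (hu : ‖u‖ ≤ 1) : f2 (z u) ≠ 0 :=
    f2_ne_zero (by rw [hz_re]; linarith) (hz_im hu)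
  have hlt := norm_lt_one_of_half_disc (g := fun u => f2 (1 - z u) / f2 (z u)) (a := 2) (b := 3)
    (x := (s.re - 1 / 2) / 7) three_ne_zero (fun u hu0 hu => ?_) (fun u hu0 _ => ?_)
    (fun u hu0 hu => ?_) (by linarith) (by linarith)
  · have hzs : z (((s.re - 1 / 2) / 7 : ℝ) : ℂ) = s := by
      apply Complex.ext
      · rw [hz_re, ofReal_re]
        ring
      · simp [hz]
    have hs := f2_ne_zero hre.le (by linarith)
    rwa [hzs, norm_div, div_lt_one (norm_pos_iff.mpr hs)] at hlt
  · have := differentiable_f2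
    have := hf2 hu0 hu
    fun_prop (disch := assumption)
  · rw [norm_div, norm_f2_one_sub_of_re_eq_half (by rw [hz_re, hu0]; norm_num)]
    exact div_self_le_one _
  · have hu1 := (re_le_norm u).trans hu.le
    obtain ⟨B, hB0, hB, hB1⟩ := exists_norm_f2_one_sub_le_mul (s := z u)
      (by rw [hz_re]; linarith) (by rw [hz_re]; linarith) (hz_im hu.le)
    rw [hz_re, add_sub_cancel_left, mul_div_cancel_left₀ _ (by norm_num)] at hB1
    refine le_trans ?_ hB1
    gcongr
    rw [norm_div]
    exact div_le_of_le_mul₀ (norm_nonneg _) hB0 hB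

theorem norm_f2_one_sub_lt {s : ℂ} (hre : 1 / 2 < s.re) (him : 36 ≤ |s.im|) :
    ‖f2 (1 - s)‖ < ‖f2 s‖ := by
  rcases le_total s.re (15 / 2) with h | h
  · exact norm_f2_one_sub_lt_of_re_le hre h him
  · have hs := norm_pos_iff.mpr (f2_ne_zero hre.le (by linarith))
    linarith [norm_f2_one_sub_le_of_five_le_re (s := s) (by linarith) (by linarith)]

theorem norm_chi_two_mul_sub_one_le {s : ℂ} (hs : 1 / 2 ≤ s.re) :
    ‖chi (2 * s - 1)‖ ≤ ‖chi (2 * s)‖ := by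
  rw [← chi_one_sub]
  exact norm_chi_le_of_im_eq_neg (by simp) (by simp; linarith) (by simp; linarith)

theorem Z2_no_zero_strip_general {s : ℂ} (hre : 1 / 2 < s.re) (him : 36 ≤ |s.im|) :
    Z2 s ≠ 0 := by
  have hchi : 0 < ‖chi (2 * s)‖ :=
    norm_pos_iff.mpr (chi_ne_zero_of_one_le_re (by simp; linarith))
  refine sub_ne_zero_of_ne fun h => lt_irrefl ‖chi (2 * s) * f2 s‖ ?_
  calc ‖chi (2 * s) * f2 s‖ = ‖chi (2 * s - 1)‖ * ‖f2 (1 - s)‖ := by rw [h, norm_mul]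
    _ ≤ ‖chi (2 * s)‖ * ‖f2 (1 - s)‖ := by
        gcongr
        exact norm_chi_two_mul_sub_one_le hre.le
    _ < ‖chi (2 * s)‖ * ‖f2 s‖ := by
        gcongr
        exact norm_f2_one_sub_lt hre him
    _ = ‖chi (2 * s) * f2 s‖ := (norm_mul _ _).symm

end

theorem Z2_no_zero_strip (s : ℂ) (h1 : 1 / 2 < s.re) (h2 : s.re < 20)
    (h3 : 36 ≤ |s.im|) : Z2 s ≠ 0 :=
  Z2_no_zero_strip_general h1 h3
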